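/- arXiv:2007.06148 — 3 statements merged into one kernel-verified Lean document; each statement's English description precedes it below -/
import Mathlib

section
/- Let z* be a local optimal solution of the MPSC, let L_f > 0 be a Lipschitz constant of f on a neighborhood of z*, and suppose that MPSC directional quasi-normality holds at z* (or, alternatively, that MPSC piecewise CRSC holds at z*). Then there exists α > 0 (an MPSC local error bound constant at z*) such that z* is a local optimal solution of the penalized problem: minimize f(z) + L_f α [Σ_{i=1}^p max{0, g_i(z)} + Σ_{j=1}^q |h_j(z)| + Σ_{i=1}^m min{|G_i(z)|, |H_i(z)|}] over z ∈ ℝⁿ. -/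
open scoped Classical InnerProductSpace
open Filter Topology

noncomputable section

/-- Euclidean space `ℝⁿ`. -/
abbrev Euc (n : ℕ) : Type := EuclideanSpace ℝ (Fin n)

/-- Data of a mathematical program with switching constraints (MPSC):
`min f(z)` s.t. `g(z) ≤ 0`, `h(z) = 0`, `Gᵢ(z)Hᵢ(z) = 0 (i = 1,…,m)`,
with all defining functions continuously differentiable (gradients `f'`, `g'`, … are
genuine gradient maps, and they are continuous). -/
structure MPSC (n p q m : ℕ) where
  f : Euc n → ℝ
  g : Fin p → Euc n → ℝ
  h : Fin q → Euc n → ℝ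
  G : Fin m → Euc n → ℝ
  H : Fin m → Euc n → ℝ
  f' : Euc n → Euc n
  g' : Fin p → Euc n → Euc n
  h' : Fin q → Euc n → Euc n
  G' : Fin m → Euc n → Euc n
  H' : Fin m → Euc n → Euc n
  grad_f : ∀ z, HasGradientAt f (f' z) z
  grad_g : ∀ i z, HasGradientAt (g i) (g' i z) z
  grad_h : ∀ j z, HasGradientAt (h j) (h' j z) z
  grad_G : ∀ i z, HasGradientAt (G i) (G' i z) z
  grad_H : ∀ i z, HasGradientAt (H i) (H' i z) z
  cont_f' : Continuous f'
  cont_g' : ∀ i, Continuous (g' i)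
  cont_h' : ∀ j, Continuous (h' j)
  cont_G' : ∀ i, Continuous (G' i)
  cont_H' : ∀ i, Continuous (H' i)

namespace MPSC

variable {n p q m : ℕ} (P : MPSC n p q m)

/-- The feasible region `F` of the MPSC. -/
def Feas : Set (Euc n) :=
  {z | (∀ i, P.g i z ≤ 0) ∧ (∀ j, P.h j z = 0) ∧ ∀ i, P.G i z * P.H i z = 0}

/-- Active inequality constraints `I_g*`. -/
def Ig (zs : Euc n) : Set (Fin p) := {i | P.g i zs = 0}

/-- `I_G* = {i : Gᵢ(z*) = 0, Hᵢ(z*) ≠ 0}`. -/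
def IGs (zs : Euc n) : Set (Fin m) := {i | P.G i zs = 0 ∧ P.H i zs ≠ 0}

/-- `I_H* = {i : Gᵢ(z*) ≠ 0, Hᵢ(z*) = 0}`. -/
def IHs (zs : Euc n) : Set (Fin m) := {i | P.G i zs ≠ 0 ∧ P.H i zs = 0}

/-- `I_GH* = {i : Gᵢ(z*) = Hᵢ(z*) = 0}`. -/
def IGH (zs : Euc n) : Set (Fin m) := {i | P.G i zs = 0 ∧ P.H i zs = 0}

/-- `I_g*(d)`. -/
def Igd (zs d : Euc n) : Set (Fin p) := {i | P.g i zs = 0 ∧ ⟪P.g' i zs, d⟫_ℝ = 0}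

/-- `I_G*(d)`. -/
def IGd (zs d : Euc n) : Set (Fin m) :=
  {i | i ∈ P.IGH zs ∧ ⟪P.G' i zs, d⟫_ℝ = 0 ∧ ⟪P.H' i zs, d⟫_ℝ ≠ 0}

/-- `I_H*(d)`. -/
def IHd (zs d : Euc n) : Set (Fin m) :=
  {i | i ∈ P.IGH zs ∧ ⟪P.G' i zs, d⟫_ℝ ≠ 0 ∧ ⟪P.H' i zs, d⟫_ℝ = 0}

/-- `I_GH*(d)`. -/
def IGHd (zs d : Euc n) : Set (Fin m) :=
  {i | i ∈ P.IGH zs ∧ ⟪P.G' i zs, d⟫_ℝ = 0 ∧ ⟪P.H' i zs, d⟫_ℝ = 0}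

/-- The linearization cone `L(z*)` of the MPSC at `z*`. -/
def LinCone (zs : Euc n) : Set (Euc n) :=
  {d | (∀ i ∈ P.Ig zs, ⟪P.g' i zs, d⟫_ℝ ≤ 0) ∧ (∀ j, ⟪P.h' j zs, d⟫_ℝ = 0) ∧
       (∀ i ∈ P.IGs zs, ⟪P.G' i zs, d⟫_ℝ = 0) ∧ (∀ i ∈ P.IHs zs, ⟪P.H' i zs, d⟫_ℝ = 0) ∧
       (∀ i ∈ P.IGH zs, ⟪P.G' i zs, d⟫_ℝ * ⟪P.H' i zs, d⟫_ℝ = 0)}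

/-- The critical cone `C(z*)`. -/
def Crit (zs : Euc n) : Set (Euc n) := {d ∈ P.LinCone zs | ⟪P.f' zs, d⟫_ℝ ≤ 0}

/-- `(λ^g, λ^h, λ^G, λ^H)` is an M-multiplier in direction `d` at `z*`. -/
def IsMMultDir (zs d : Euc n) (lg : Fin p → ℝ) (lh : Fin q → ℝ) (lG lH : Fin m → ℝ) : Prop :=
  ((0 : Euc n) = P.f' zs
      + (∑ i ∈ Finset.univ.filter (fun i => i ∈ P.Igd zs d), lg i • P.g' i zs)
      + (∑ j, lh j • P.h' j zs) + (∑ i, (lG i • P.G' i zs + lH i • P.H' i zs))) ∧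
  (∀ i ∈ P.Igd zs d, 0 ≤ lg i) ∧ (∀ i ∉ P.Igd zs d, lg i = 0) ∧
  (∀ i, i ∈ P.IHs zs ∪ P.IHd zs d → lG i = 0) ∧
  (∀ i, i ∈ P.IGs zs ∪ P.IGd zs d → lH i = 0) ∧
  ∀ i ∈ P.IGHd zs d, lG i * lH i = 0

/-- `z*` is M-stationary in direction `d`. -/
def MStatDir (zs d : Euc n) : Prop :=
  ∃ (lg : Fin p → ℝ) (lh : Fin q → ℝ) (lG lH : Fin m → ℝ), P.IsMMultDir zs d lg lh lG lH

/-- `z*` is S-stationary in direction `d`. -/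
def SStatDir (zs d : Euc n) : Prop :=
  ∃ (lg : Fin p → ℝ) (lh : Fin q → ℝ) (lG lH : Fin m → ℝ),
    P.IsMMultDir zs d lg lh lG lH ∧ ∀ i ∈ P.IGHd zs d, lG i = 0 ∧ lH i = 0

/-- MPSC-LICQ in direction `d` at `z*`. -/
def LICQd (zs d : Euc n) : Prop :=
  LinearIndependent ℝ
    (Sum.elim (fun i : {i // i ∈ P.Igd zs d} => P.g' i.1 zs)
      (Sum.elim (fun j : Fin q => P.h' j zs)
        (Sum.elim (fun i : {i // i ∈ P.IGs zs ∪ P.IGd zs d ∪ P.IGHd zs d} => P.G' i.1 zs)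
          (fun i : {i // i ∈ P.IHs zs ∪ P.IHd zs d ∪ P.IGHd zs d} => P.H' i.1 zs))))

/-- MPSC-LICQ at `z*`. -/
def LICQ (zs : Euc n) : Prop :=
  LinearIndependent ℝ
    (Sum.elim (fun i : {i // i ∈ P.Ig zs} => P.g' i.1 zs)
      (Sum.elim (fun j : Fin q => P.h' j zs)
        (Sum.elim (fun i : {i // i ∈ P.IGs zs ∪ P.IGH zs} => P.G' i.1 zs)
          (fun i : {i // i ∈ P.IHs zs ∪ P.IGH zs} => P.H' i.1 zs))))

/-- MPSC quasi-normality at `z*` in direction `d`. -/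
def QuasiNormalDir (zs d : Euc n) : Prop :=
  ∀ (lg : Fin p → ℝ) (lh : Fin q → ℝ) (lG lH : Fin m → ℝ),
    ((0 : Euc n) = (∑ i, lg i • P.g' i zs) + (∑ j, lh j • P.h' j zs)
        + (∑ i, (lG i • P.G' i zs + lH i • P.H' i zs))) →
    ((∀ i ∈ P.Igd zs d, 0 ≤ lg i) ∧ (∀ i ∉ P.Igd zs d, lg i = 0) ∧
      (∀ i, i ∈ P.IGs zs ∪ P.IGd zs d → lH i = 0) ∧
      (∀ i, i ∈ P.IHs zs ∪ P.IHd zs d → lG i = 0) ∧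
      ∀ i ∈ P.IGHd zs d, lG i * lH i = 0) →
    (∃ (dk : ℕ → Euc n) (t : ℕ → ℝ),
      Tendsto dk atTop (𝓝 d) ∧ (∀ k, 0 < t k) ∧ Tendsto t atTop (𝓝 0) ∧
      ∀ k, (∀ i, lg i ≠ 0 → 0 < lg i * P.g i (zs + t k • dk k)) ∧
        (∀ j, lh j ≠ 0 → 0 < lh j * P.h j (zs + t k • dk k)) ∧
        (∀ i, lG i ≠ 0 → 0 < lG i * P.G i (zs + t k • dk k)) ∧
        (∀ i, lH i ≠ 0 → 0 < lH i * P.H i (zs + t k • dk k))) →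
    lg = 0 ∧ lh = 0 ∧ lG = 0 ∧ lH = 0

/-- MPSC directional quasi-normality at `z*`: quasi-normality in every direction of
the linearization cone. -/
def DirQuasiNormal (zs : Euc n) : Prop := ∀ d ∈ P.LinCone zs, P.QuasiNormalDir zs d

/-- `(λ^g, λ^h, λ^G, λ^H)` is an S-multiplier at `z*` (S-stationarity conditions). -/
def IsSMult (zs : Euc n) (lg : Fin p → ℝ) (lh : Fin q → ℝ) (lG lH : Fin m → ℝ) : Prop :=
  ((0 : Euc n) = P.f' zs
      + (∑ i ∈ Finset.univ.filter (fun i => i ∈ P.Ig zs), lg i • P.g' i zs)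
      + (∑ j, lh j • P.h' j zs) + (∑ i, (lG i • P.G' i zs + lH i • P.H' i zs))) ∧
  (∀ i ∈ P.Ig zs, 0 ≤ lg i) ∧ (∀ i ∈ P.IHs zs, lG i = 0) ∧ (∀ i ∈ P.IGs zs, lH i = 0) ∧
  ∀ i ∈ P.IGH zs, lG i = 0 ∧ lH i = 0

/-- `(λ^g, λ^h, λ^G, λ^H)` is an M-multiplier at `z*` (M-stationarity conditions). -/
def IsMMult (zs : Euc n) (lg : Fin p → ℝ) (lh : Fin q → ℝ) (lG lH : Fin m → ℝ) : Prop :=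
  ((0 : Euc n) = P.f' zs
      + (∑ i ∈ Finset.univ.filter (fun i => i ∈ P.Ig zs), lg i • P.g' i zs)
      + (∑ j, lh j • P.h' j zs) + (∑ i, (lG i • P.G' i zs + lH i • P.H' i zs))) ∧
  (∀ i ∈ P.Ig zs, 0 ≤ lg i) ∧ (∀ i ∈ P.IHs zs, lG i = 0) ∧ (∀ i ∈ P.IGs zs, lH i = 0) ∧
  ∀ i ∈ P.IGH zs, lG i * lH i = 0

/-- The rank `r(z*; d)` of the relevant family of gradients. -/
def rankd (zs d : Euc n) : ℕ :=
  Set.finrank ℝ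
    ((fun i => P.g' i zs) '' P.Igd zs d ∪ Set.range (fun j => P.h' j zs) ∪
      (fun i => P.G' i zs) '' (P.IGs zs ∪ P.IGd zs d ∪ P.IGHd zs d) ∪
      (fun i => P.H' i zs) '' (P.IHs zs ∪ P.IHd zs d ∪ P.IGHd zs d))

/-- `(J_g, J_G, J_H)` is an MPSC working set in direction `d`. -/
def IsWorkingSet (zs d : Euc n) (Jg : Finset (Fin p)) (JG JH : Finset (Fin m)) : Prop :=
  (∀ i ∈ Jg, i ∈ P.Igd zs d) ∧
  (∀ i ∈ JG, i ∈ P.IGs zs ∪ P.IGd zs d ∪ P.IGHd zs d) ∧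
  (∀ i ∈ JH, i ∈ P.IHs zs ∪ P.IHd zs d ∪ P.IGHd zs d) ∧
  JG ∪ JH = Finset.univ ∧
  Jg.card + q + JG.card + JH.card = P.rankd zs d ∧
  LinearIndependent ℝ
    (Sum.elim (fun i : {i // i ∈ Jg} => P.g' i.1 zs)
      (Sum.elim (fun j : Fin q => P.h' j zs)
        (Sum.elim (fun i : {i // i ∈ JG} => P.G' i.1 zs)
          (fun i : {i // i ∈ JH} => P.H' i.1 zs))))

/-- `z*` is strongly M-stationary in direction `d`. -/
def StronglyMStatDir (zs d : Euc n) : Prop :=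
  ∃ (Jg : Finset (Fin p)) (JG JH : Finset (Fin m)) (lg : Fin p → ℝ) (lh : Fin q → ℝ)
    (lG lH : Fin m → ℝ),
    P.IsWorkingSet zs d Jg JG JH ∧ P.IsMMultDir zs d lg lh lG lH ∧
    (∀ i ∉ Jg, lg i = 0) ∧ (∀ i ∉ JG, lG i = 0) ∧ (∀ i ∉ JH, lH i = 0) ∧
    ∀ i ∈ JG ∩ JH, lG i = 0 ∧ lH i = 0

/-- The MPSC constraint-violation residual. -/
def residual (z : Euc n) : ℝ :=
  (∑ i, max (P.g i z) 0) + (∑ j, |P.h j z|) + ∑ i, min |P.G i z| |P.H i z|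

/-- The MPSC local error bound property around `z*`. -/
def ErrorBound (zs : Euc n) : Prop :=
  ∃ V ∈ 𝓝 zs, ∃ α > (0 : ℝ), ∀ z ∈ V, Metric.infDist z P.Feas ≤ α * P.residual z

/-- Equality-constraint gradients (at `z`) of the branch problem `NLP(β₁, β₂)`. -/
def EqGrads (zs : Euc n) (b1 b2 : Set (Fin m)) (z : Euc n) : Set (Euc n) :=
  Set.range (fun j => P.h' j z) ∪ (fun i => P.G' i z) '' (P.IGs zs ∪ b1) ∪
    (fun i => P.H' i z) '' (P.IHs zs ∪ b2)

/-- The index set `I⁻` of the branch problem `NLP(β₁, β₂)` at `z*`. -/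
def Iminus (zs : Euc n) (b1 b2 : Set (Fin m)) : Set (Fin p) :=
  {l | l ∈ P.Ig zs ∧
    ∃ (lh : Fin q → ℝ) (lG lH : Fin m → ℝ) (mu : Fin p → ℝ),
      (∀ i, i ∉ P.IGs zs ∪ b1 → lG i = 0) ∧ (∀ i, i ∉ P.IHs zs ∪ b2 → lH i = 0) ∧
      (∀ i, 0 ≤ mu i) ∧ (∀ i, ¬(i ∈ P.Ig zs ∧ i ≠ l) → mu i = 0) ∧
      -(P.g' l zs) = (∑ j, lh j • P.h' j zs)
        + (∑ i, (lG i • P.G' i zs + lH i • P.H' i zs)) + (∑ i, mu i • P.g' i zs)}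

/-- CRSC holds at `z*` for the branch problem `NLP(β₁, β₂)`. -/
def CRSCpiece (zs : Euc n) (b1 b2 : Set (Fin m)) : Prop :=
  ∃ U ∈ 𝓝 zs, ∀ z ∈ U,
    Set.finrank ℝ ((fun i => P.g' i z) '' P.Iminus zs b1 b2 ∪ P.EqGrads zs b1 b2 z) =
      Set.finrank ℝ ((fun i => P.g' i zs) '' P.Iminus zs b1 b2 ∪ P.EqGrads zs b1 b2 zs)

/-- MPSC piecewise CRSC: CRSC holds for every branch problem `NLP(β₁, β₂)`. -/
def PiecewiseCRSC (zs : Euc n) : Prop :=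
  ∀ b1 b2 : Set (Fin m), b1 ∪ b2 = P.IGH zs → b1 ∩ b2 = ∅ → P.CRSCpiece zs b1 b2

/-- The set-valued map `K` (index sets frozen at `z*`, gradients at `z`). -/
def Kmap (zs z : Euc n) : Set (Euc n) :=
  {y | ∃ (lg : Fin p → ℝ) (lh : Fin q → ℝ) (lG lH : Fin m → ℝ),
      (∀ i, 0 ≤ lg i) ∧ (∀ i, i ∉ P.Ig zs → lg i = 0) ∧
      (∀ i ∈ P.IGs zs, lH i = 0) ∧ (∀ i ∈ P.IHs zs, lG i = 0) ∧
      (∀ i ∈ P.IGH zs, lG i * lH i = 0) ∧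
      y = (∑ i, lg i • P.g' i z) + (∑ j, lh j • P.h' j z)
          + (∑ i, (lG i • P.G' i z + lH i • P.H' i z))}

/-- `z*` is AM-regular. -/
def AMRegular (zs : Euc n) : Prop :=
  ∀ y : Euc n,
    (∃ zk yk : ℕ → Euc n, Tendsto zk atTop (𝓝 zs) ∧ Tendsto yk atTop (𝓝 y) ∧
      ∀ k, yk k ∈ P.Kmap zs (zk k)) → y ∈ P.Kmap zs zs

/-- The regular (Fréchet) normal cone to `A` at `x`. -/
def frechetNormalCone (A : Set (Euc n)) (x : Euc n) : Set (Euc n) :=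
  {ζ | ∀ ε > (0 : ℝ), ∃ δ > (0 : ℝ), ∀ y ∈ A, ‖y - x‖ < δ → ⟪ζ, y - x⟫_ℝ ≤ ε * ‖y - x‖}

/-- The generalized Guignard constraint qualification at `z*`. -/
def GGCQ (zs : Euc n) : Prop :=
  frechetNormalCone P.Feas zs = {ζ | ∀ d ∈ P.LinCone zs, ⟪ζ, d⟫_ℝ ≤ 0}

/-- Membership in the multiplier set `R_SC`. -/
def InRSC (zs : Euc n) (lg : Fin p → ℝ) (lh : Fin q → ℝ) (lG lH : Fin m → ℝ) : Prop :=
  (∀ i, i ∉ P.Ig zs → lg i = 0) ∧ (∀ i ∈ P.IHs zs, lG i = 0) ∧ ∀ i ∈ P.IGs zs, lH i = 0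

/-- Membership in the multiplier set `N_SC`. -/
def InNSC (zs : Euc n) (mg : Fin p → ℝ) (mh : Fin q → ℝ) (mG mH : Fin m → ℝ) : Prop :=
  P.InRSC zs mg mh mG mH ∧
  (0 : Euc n) = (∑ i, mg i • P.g' i zs) + (∑ j, mh j • P.h' j zs)
      + (∑ i, (mG i • P.G' i zs + mH i • P.H' i zs))

/-- `z*` is Q-stationary with respect to the bipartition `(β₁, β₂)` of `I_GH*`. -/
def QStat (zs : Euc n) (b1 b2 : Set (Fin m)) : Prop :=
  ∃ (lg mg : Fin p → ℝ) (lh mh : Fin q → ℝ) (lG lH mG mH : Fin m → ℝ),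
    P.InRSC zs lg lh lG lH ∧
    ((0 : Euc n) = P.f' zs + (∑ i, lg i • P.g' i zs) + (∑ j, lh j • P.h' j zs)
        + (∑ i, (lG i • P.G' i zs + lH i • P.H' i zs))) ∧
    P.InNSC zs mg mh mG mH ∧
    (∀ i ∈ P.Ig zs, max (mg i) 0 ≤ lg i) ∧
    (∀ i ∈ b1, lH i = 0 ∧ lG i = mG i) ∧
    ∀ i ∈ b2, lG i = 0 ∧ lH i = mH i

end MPSC

/-!
Clarke's exact penalization reduces the theorem to a local error bound. Selecting for each `i` the
smaller of `|Gᵢ(z)|` and `|Hᵢ(z)|` bounds the residual below by the norm of the violation of one of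
finitely many branch problems, so an error bound for every branch feasible at `z*` suffices.

If a branch has no error bound, then minimizing the norm of its violation plus `ε * dist` yields
infeasible points `y → z*` at which the gradient of this norm tends to zero. The violation at `y`
divided by its norm is the vector of coefficients in this gradient, and it clusters at a unit
multiplier `c` that is abnormal at `z*`. Along the cluster sequence every `t` with `c t ≠ 0` has
`0 < c t * fn t y`, which quasi-normality in the direction `0` forbids.

Under CRSC the constant rank theorem shows that `∑ t, c t * fn t` is `o(violation)` for every
abnormal multiplier `c`. Along the cluster sequence, however, this sum divided by the norm of the
violation tends to `‖c‖² = 1`.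
-/

section Penalization

variable {X : Type*} [PseudoMetricSpace X]

theorem eventually_le_add_mul_infDist_of_isLocalMinOn {f : X → ℝ} {S U : Set X} {x : X}
    {K : NNReal} (hf : LipschitzOnWith K f U) (hU : U ∈ 𝓝 x) (hx : x ∈ S)
    (hmin : IsLocalMinOn f S x) : ∀ᶠ z in 𝓝 x, f x ≤ f z + K * Metric.infDist z S := by
  obtain ⟨r, hr, hball⟩ :=
    Metric.eventually_nhds_iff_ball.1
      ((eventually_mem_set.2 hU).and (eventually_nhdsWithin_iff.1 hmin))
  filter_upwards [Metric.ball_mem_nhds x (half_pos hr)] with z hz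
  have hdist : Metric.infDist z S < r / 2 := (Metric.infDist_le_dist_of_mem hx).trans_lt hz
  have hzU : z ∈ U := (hball z (Metric.ball_subset_ball (half_le_self hr.le) hz)).1
  have key : ∀ᶠ c in 𝓝[>] Metric.infDist z S, f x ≤ f z + K * c := by
    filter_upwards [self_mem_nhdsWithin, mem_nhdsWithin_of_mem_nhds (Iio_mem_nhds hdist)]
      with c hc hcr
    obtain ⟨y, hyS, hzy⟩ := (Metric.infDist_lt_iff ⟨x, hx⟩).1 hc
    have hy : dist y x < r := by
      have := dist_triangle_left y x z
      rw [Metric.mem_ball] at hz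
      linarith [Set.mem_Iio.1 hcr]
    obtain ⟨hyU, hymin⟩ := hball y hy
    calc f x ≤ f y := hymin hyS
      _ ≤ f z + K * dist y z := hf.le_add_mul hyU hzU
      _ ≤ f z + K * c := by rw [dist_comm]; gcongr
  refine ge_of_tendsto ?_ key
  exact ((continuous_const.add (continuous_const.mul continuous_id)).tendsto _).mono_left
    nhdsWithin_le_nhds

end Penalization

section SlopeCriterion

variable {X : Type*} [MetricSpace X] [ProperSpace X]

theorem exists_add_mul_dist_le_forall_le_add_mul_dist {f : X → ℝ} (hf : Continuous f)
    (hf0 : ∀ y, 0 ≤ f y) {ε : ℝ} (hε : 0 < ε) (x : X) :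
    ∃ y, f y + ε * dist y x ≤ f x ∧ ∀ u, f y ≤ f u + ε * dist u y := by
  have : Nonempty X := ⟨x⟩
  have hcoercive : Tendsto (fun u => f u + ε * dist u x) (cocompact X) atTop :=
    tendsto_atTop_mono (fun u => le_add_of_nonneg_left (hf0 u))
      ((tendsto_dist_right_cocompact_atTop x).const_mul_atTop hε)
  obtain ⟨y, hy⟩ := Continuous.exists_forall_le (by fun_prop) hcoercive
  refine ⟨y, by simpa using hy x, fun u => ?_⟩
  have htri := mul_le_mul_of_nonneg_left (dist_triangle u y x) hε.le
  linarith [hy u]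

theorem eventually_infDist_zeros_le_of_eventually_descent {r : X → ℝ} (hr : Continuous r)
    (hr0 : ∀ y, 0 ≤ r y) {x : X} (hx : r x = 0) {ε : ℝ} (hε : 0 < ε)
    (hdesc : ∀ᶠ y in 𝓝 x, 0 < r y → ∃ u, r u + ε * dist u y < r y) :
    ∀ᶠ z in 𝓝 x, Metric.infDist z {y | r y = 0} ≤ r z / ε := by
  obtain ⟨ρ, hρ, hball⟩ := Metric.eventually_nhds_iff_ball.1 hdesc
  have hsmall : ∀ᶠ z in 𝓝 x, r z / ε + dist z x < ρ :=
    ContinuousAt.eventually_lt (by fun_prop) continuousAt_const (by simpa [hx] using hρ)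
  filter_upwards [hsmall] with z hz
  obtain ⟨y, hyz, hy⟩ := exists_add_mul_dist_le_forall_le_add_mul_dist hr hr0 hε z
  have hdist : dist y z ≤ r z / ε := by
    rw [le_div_iff₀' hε]
    linarith [hr0 y]
  have hyx : y ∈ Metric.ball x ρ := by
    have := dist_triangle y z x
    rw [Metric.mem_ball]
    linarith
  have hy0 : y ∈ {y | r y = 0} := by
    by_contra hne
    obtain ⟨u, hu⟩ := hball y hyx ((hr0 y).lt_of_ne' hne)
    exact (hy u).not_gt hu
  exact (Metric.infDist_le_dist_of_mem hy0).trans (dist_comm y z ▸ hdist)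

end SlopeCriterion

section Calculus

theorem contDiff_one_of_hasGradientAt {E : Type*} [NormedAddCommGroup E] [InnerProductSpace ℝ E]
    [CompleteSpace E] {f : E → ℝ} {f' : E → E}
    (h : ∀ z, HasGradientAt f (f' z) z) (hf' : Continuous f') : ContDiff ℝ 1 f :=
  contDiff_one_iff_hasFDerivAt.2 ⟨fun z => InnerProductSpace.toDual ℝ E (f' z),
    (InnerProductSpace.toDual ℝ E).continuous.comp hf', fun z => (h z).hasFDerivAt⟩

theorem norm_le_of_hasFDerivAt_of_forall_le_add_mul_dist {E : Type*} [NormedAddCommGroup E]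
    [NormedSpace ℝ E] {f : E → ℝ} {f' : E →L[ℝ] ℝ} {x : E} {ε : ℝ} (hε : 0 ≤ ε)
    (hf : HasFDerivAt f f' x) (hx : ∀ᶠ u in 𝓝 x, f x ≤ f u + ε * dist u x) : ‖f'‖ ≤ ε := by
  have hneg (v : E) : -(ε * ‖v‖) ≤ f' v := by
    refine ge_of_tendsto (hf.hasLineDerivAt v).tendsto_slope_zero_right ?_
    have htend : Tendsto (fun t : ℝ => x + t • v) (𝓝[>] 0) (𝓝 x) :=
      ((by fun_prop : Continuous fun t : ℝ => x + t • v).tendsto' 0 x (by simp)).mono_left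
        nhdsWithin_le_nhds
    filter_upwards [htend.eventually hx, self_mem_nhdsWithin] with t ht htpos
    rw [Set.mem_Ioi] at htpos
    rw [smul_eq_mul, le_inv_mul_iff₀ htpos]
    simp only [dist_self_add_left, norm_smul, Real.norm_of_nonneg htpos.le] at ht
    linarith
  refine f'.opNorm_le_bound hε fun v => abs_le.2 ⟨hneg v, ?_⟩
  simpa using neg_le_neg (hneg (-v))

theorem hasDerivAt_max_zero_sq (s : ℝ) : HasDerivAt (fun t : ℝ => max t 0 ^ 2) (2 * max s 0) s := by
  have hbound (t : ℝ) : |max t 0 ^ 2 - max s 0 ^ 2 - (t - s) * (2 * max s 0)| ≤ |t - s| ^ 2 := by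
    rw [sq_abs, abs_le]
    rcases max_cases t 0 with ⟨ht, _⟩ | ⟨ht, _⟩ <;> rcases max_cases s 0 with ⟨hs, _⟩ | ⟨hs, _⟩ <;>
      rw [ht, hs] <;> constructor <;> nlinarith
  refine hasDerivAt_iff_isLittleO.2 (Asymptotics.IsBigO.trans_isLittleO ?_
    (Asymptotics.isLittleO_pow_sub_sub s one_lt_two))
  exact .of_norm_le fun t => by simpa using hbound t

theorem exists_seq_add_smul_of_frequently {E : Type*} [NormedAddCommGroup E] [NormedSpace ℝ E]
    {p : E → Prop} {x : E} (h : ∃ᶠ z in 𝓝 x, p z) :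
    ∃ (d : ℕ → E) (t : ℕ → ℝ), Tendsto d atTop (𝓝 0) ∧ (∀ k, 0 < t k) ∧
      Tendsto t atTop (𝓝 0) ∧ ∀ k, p (x + t k • d k) := by
  let t (k : ℕ) : ℝ := 1 / (k + 1)
  have ht (k : ℕ) : 0 < t k := Nat.one_div_pos_of_nat
  have hz (k : ℕ) : ∃ z, p z ∧ ‖z - x‖ < t k * t k := by
    obtain ⟨z, hpz, hz⟩ :=
      (h.and_eventually (Metric.ball_mem_nhds x (mul_pos (ht k) (ht k)))).exists
    exact ⟨z, hpz, mem_ball_iff_norm.1 hz⟩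
  choose z hpz hz using hz
  have ht0 : Tendsto t atTop (𝓝 0) := tendsto_one_div_add_atTop_nhds_zero_nat
  refine ⟨fun k => (t k)⁻¹ • (z k - x), t, squeeze_zero_norm (fun k => ?_) ht0, ht, ht0,
    fun k => ?_⟩
  · rw [norm_smul, norm_inv, Real.norm_of_nonneg (ht k).le, inv_mul_le_iff₀ (ht k)]
    exact (hz k).le
  · rw [smul_inv_smul₀ (ht k).ne', add_sub_cancel]
    exact hpz k

end Calculus

section FunctionalDependence

variable {E F G : Type*} [NormedAddCommGroup E] [NormedSpace ℝ E] [NormedAddCommGroup F]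
  [NormedSpace ℝ F] [NormedAddCommGroup G] [NormedSpace ℝ G]

theorem eventually_eq_of_ker_le_ker_fderiv {χ : E → G} {A : E →L[ℝ] F} {x : E}
    (hχ : ∀ᶠ y in 𝓝 x, DifferentiableAt ℝ χ y)
    (hker : ∀ᶠ y in 𝓝 x, ∀ v, A v = 0 → fderiv ℝ χ y v = 0) :
    ∀ᶠ p in 𝓝 (x, x), A p.1 = A p.2 → χ p.1 = χ p.2 := by
  obtain ⟨ρ, hρ, hball⟩ := Metric.eventually_nhds_iff_ball.1 (hχ.and hker)
  rw [nhds_prod_eq]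
  filter_upwards [prod_mem_prod (Metric.ball_mem_nhds x hρ) (Metric.ball_mem_nhds x hρ)]
  rintro ⟨a, b⟩ ⟨ha, hb⟩ hab
  have hderiv (t : ℝ) (ht : t ∈ Set.Icc (0 : ℝ) 1) :
      HasDerivAt (fun t : ℝ => χ (AffineMap.lineMap a b t)) 0 t := by
    have hmem : AffineMap.lineMap a b t ∈ Metric.ball x ρ :=
      (convex_ball x ρ).lineMap_mem ha hb ht
    obtain ⟨hdiff, hkert⟩ := hball _ hmem
    rw [← hkert (b - a) (by rw [map_sub, sub_eq_zero]; exact hab.symm)]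
    exact hdiff.hasFDerivAt.comp_hasDerivAt t AffineMap.hasDerivAt_lineMap
  have hconst := constant_of_has_deriv_right_zero
    (fun t ht => (hderiv t ht).continuousAt.continuousWithinAt)
    (fun t ht => (hderiv t (Set.Ico_subset_Icc_self ht)).hasDerivWithinAt) 1
    (Set.right_mem_Icc.2 zero_le_one)
  simpa using hconst.symm

theorem exists_straightening_of_hasRightInverse [CompleteSpace E] {Φ : E → F} {x : E}
    (hΦ : ContDiffAt ℝ 1 Φ x) {R : F →L[ℝ] E} (hR : ∀ v, fderiv ℝ Φ x (R v) = v) :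
    ∃ η : E → E, ContDiffAt ℝ 1 η x ∧ η x = x ∧
      (∀ᶠ y in 𝓝 x, Φ (η y) = Φ x + fderiv ℝ Φ x (y - x)) ∧
      ∀ᶠ z in 𝓝 x, η (z + R (Φ z - Φ x - fderiv ℝ Φ x (z - x))) = z := by
  set A := fderiv ℝ Φ x
  -- In the coordinate `Θ`, whose local inverse is `η`, the map `Φ` becomes affine.
  let Θ (z : E) : E := z + R (Φ z - Φ x - A (z - x))
  have hΘx : Θ x = x := by simp [Θ]
  have hΘ : ContDiffAt ℝ 1 Θ x := by fun_prop
  have hΘ' : HasFDerivAt Θ (ContinuousLinearEquiv.refl ℝ E : E →L[ℝ] E) x := by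
    have hΦ' : HasFDerivAt Φ A x := (hΦ.differentiableAt one_ne_zero).hasFDerivAt
    have hsum : HasFDerivAt Θ (.id ℝ E + R.comp (A - A.comp (.id ℝ E))) x :=
      (hasFDerivAt_id x).add (R.hasFDerivAt.comp x
        ((hΦ'.sub_const (Φ x)).sub (A.hasFDerivAt.comp x ((hasFDerivAt_id x).sub_const x))))
    simpa using hsum
  have hstrict := hΘ.hasStrictFDerivAt' hΘ' one_ne_zero
  have hη := hΘ.to_localInverse hΘ' one_ne_zero
  have hηx := hΘ.localInverse_apply_image hΘ' one_ne_zero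
  have hright : ∀ᶠ y in 𝓝 (Θ x), Θ (hΘ.localInverse hΘ' one_ne_zero y) = y :=
    hstrict.eventually_right_inverse
  rw [hΘx] at hη hηx hright
  refine ⟨hΘ.localInverse hΘ' one_ne_zero, hη, hηx, ?_, hstrict.eventually_left_inverse⟩
  filter_upwards [hright] with y hy
  have hAΘ (z : E) : A (Θ z) = Φ z - Φ x + A x := by
    simp only [Θ, map_add, hR, map_sub]
    abel
  have hAy := hAΘ (hΘ.localInverse hΘ' one_ne_zero y)
  rw [hy] at hAy
  rw [map_sub, hAy]
  abel

theorem exists_eventuallyEq_comp_of_ker_fderiv_le [CompleteSpace E] {Φ : E → F} {ψ : E → G}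
    {x : E} (hΦ : ContDiffAt ℝ 1 Φ x) (hψ : ContDiffAt ℝ 1 ψ x)
    (hinv : (fderiv ℝ Φ x).HasRightInverse)
    (hker : ∀ᶠ z in 𝓝 x, ∀ v, fderiv ℝ Φ z v = 0 → fderiv ℝ ψ z v = 0) :
    ∃ g : F → G, DifferentiableAt ℝ g (Φ x) ∧ ψ =ᶠ[𝓝 x] g ∘ Φ := by
  obtain ⟨R, hR : ∀ v, fderiv ℝ Φ x (R v) = v⟩ := hinv
  obtain ⟨η, hη, hηx, hΦη, hηΘ⟩ := exists_straightening_of_hasRightInverse hΦ hR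
  have hηtend : Tendsto η (𝓝 x) (𝓝 x) := by simpa [ContinuousAt, hηx] using hη.continuousAt
  have hηdiff : ∀ᶠ y in 𝓝 x, DifferentiableAt ℝ η y :=
    (hη.eventually (by simp)).mono fun y hy => hy.differentiableAt one_ne_zero
  have hΦdiff : ∀ᶠ z in 𝓝 x, DifferentiableAt ℝ Φ z :=
    (hΦ.eventually (by simp)).mono fun z hz => hz.differentiableAt one_ne_zero
  have hψdiff : ∀ᶠ z in 𝓝 x, DifferentiableAt ℝ ψ z :=
    (hψ.eventually (by simp)).mono fun z hz => hz.differentiableAt one_ne_zero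
  have hfiber : ∀ᶠ p in 𝓝 (x, x), fderiv ℝ Φ x p.1 = fderiv ℝ Φ x p.2 →
      ψ (η p.1) = ψ (η p.2) := by
    refine eventually_eq_of_ker_le_ker_fderiv (χ := ψ ∘ η) ?_ ?_
    · filter_upwards [hηdiff, hηtend.eventually hψdiff] with y h1 h2 using h2.comp y h1
    · filter_upwards [hηdiff, hηtend.eventually hψdiff, hηtend.eventually hΦdiff,
        hηtend.eventually hker, hΦη.eventually_nhds] with y hηy hψy hΦy hkery hΦηy v hv
      have hcomp : fderiv ℝ Φ (η y) (fderiv ℝ η y v) = fderiv ℝ Φ x v := by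
        have hlin : HasFDerivAt (fun y => Φ x + fderiv ℝ Φ x (y - x)) (fderiv ℝ Φ x) y :=
          ((fderiv ℝ Φ x).hasFDerivAt.comp y ((hasFDerivAt_id y).sub_const x)).const_add _
        have hΦη' : HasFDerivAt (Φ ∘ η) (fderiv ℝ Φ x) y := hlin.congr_of_eventuallyEq hΦηy
        exact DFunLike.congr_fun ((hΦy.hasFDerivAt.comp y hηy.hasFDerivAt).unique hΦη') v
      rw [fderiv_comp y hψy hηy, ContinuousLinearMap.comp_apply]
      exact hkery _ (hcomp.trans hv)
  refine ⟨fun v => ψ (η (x + R (v - Φ x))), ?_, ?_⟩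
  · have hψx : DifferentiableAt ℝ ψ (η (x + R (Φ x - Φ x))) := by
      simpa [hηx] using hψdiff.self_of_nhds
    have hηx' : DifferentiableAt ℝ η (x + R (Φ x - Φ x)) := by
      simpa using hηdiff.self_of_nhds
    exact hψx.comp (Φ x) (f := fun v => η (x + R (v - Φ x))) (hηx'.comp (Φ x) (by fun_prop))
  · have htend : Tendsto (fun z => (z + R (Φ z - Φ x - fderiv ℝ Φ x (z - x)), x + R (Φ z - Φ x)))
        (𝓝 x) (𝓝 (x, x)) := by
      have hΦc := hΦ.continuousAt
      have hpair : ContinuousAt (fun z => (z + R (Φ z - Φ x - fderiv ℝ Φ x (z - x)),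
        x + R (Φ z - Φ x))) x := by fun_prop
      simpa [ContinuousAt] using hpair
    filter_upwards [hηΘ, htend.eventually hfiber] with z hz hzfib
    rw [hz] at hzfib
    refine hzfib ?_
    simp only [map_add, hR, map_sub]
    abel

theorem isLittleO_sub_of_ker_fderiv_le [CompleteSpace E] {Φ : E → F} {ψ : E → G} {x : E}
    (hΦ : ContDiffAt ℝ 1 Φ x) (hψ : ContDiffAt ℝ 1 ψ x)
    (hinv : (fderiv ℝ Φ x).HasRightInverse)
    (hker : ∀ᶠ z in 𝓝 x, ∀ v, fderiv ℝ Φ z v = 0 → fderiv ℝ ψ z v = 0)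
    (hψ' : fderiv ℝ ψ x = 0) :
    (fun z => ψ z - ψ x) =o[𝓝 x] fun z => Φ z - Φ x := by
  obtain ⟨g, hg, hψg⟩ := exists_eventuallyEq_comp_of_ker_fderiv_le hΦ hψ hinv hker
  have hg' : fderiv ℝ g (Φ x) = 0 := by
    ext v
    obtain ⟨w, rfl⟩ := hinv.surjective v
    have hchain := fderiv_comp x hg (hΦ.differentiableAt one_ne_zero)
    rw [← hψg.fderiv_eq, hψ'] at hchain
    exact DFunLike.congr_fun hchain.symm w
  have hgo := (hasFDerivAt_iff_isLittleO.1 hg.hasFDerivAt).comp_tendsto hΦ.continuousAt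
  refine hgo.congr' ?_ .rfl
  filter_upwards [hψg] with z hz
  simp [hg', hz, hψg.self_of_nhds]

theorem finrank_image_linearEquiv {K V W : Type*} [DivisionRing K] [AddCommGroup V] [Module K V]
    [AddCommGroup W] [Module K W] (e : V ≃ₗ[K] W) (s : Set V) :
    (e '' s).finrank K = s.finrank K := by
  rw [Set.finrank, Set.finrank, ← LinearEquiv.finrank_map_eq e, Submodule.map_span]
  rfl

theorem surjective_pi_of_linearIndependent {K V ι : Type*} [Field K] [AddCommGroup V] [Module K V]
    [Finite ι] {φ : ι → V →ₗ[K] K} (hφ : LinearIndependent K φ) :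
    Function.Surjective (LinearMap.pi φ) := by
  cases nonempty_fintype ι
  rw [← LinearMap.range_eq_top]
  by_contra hne
  obtain ⟨c, hc, hle⟩ := Submodule.exists_le_ker_of_lt_top _ (lt_top_iff_ne_top.2 hne)
  have hcomb : ∑ i, c (fun j => if i = j then 1 else 0) • φ i = 0 := by
    ext v
    have hcv : c (LinearMap.pi φ v) = 0 := hle (LinearMap.mem_range_self _ v)
    rw [LinearMap.pi_apply_eq_sum_univ] at hcv
    simpa [mul_comm] using hcv
  have hcoeff := Fintype.linearIndependent_iff.1 hφ _ hcomb
  refine hc (LinearMap.ext fun w => ?_)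
  simp [LinearMap.pi_apply_eq_sum_univ, hcoeff]

theorem exists_linearIndependent_eventually_span_eq {X V κ : Type*} [TopologicalSpace X]
    [NormedAddCommGroup V] [NormedSpace ℝ V] [Finite κ] {v : X → κ → V} {x : X}
    (hv : ContinuousAt v x)
    (hrank : ∀ᶠ z in 𝓝 x, (Set.range (v z)).finrank ℝ = (Set.range (v x)).finrank ℝ) :
    ∃ s : Set κ, LinearIndependent ℝ (fun i : s => v x i) ∧ ∀ᶠ z in 𝓝 x,
      Submodule.span ℝ (Set.range fun i : s => v z i) = Submodule.span ℝ (Set.range (v z)) := by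
  obtain ⟨s, -, -, hspan, hLI⟩ :=
    exists_linearIndepOn_extension (linearIndepOn_empty ℝ (v x)) (Set.empty_subset Set.univ)
  cases nonempty_fintype s
  have hLI_near : ∀ᶠ z in 𝓝 x, LinearIndependent ℝ fun i : s => v z i := by
    have hcont : ContinuousAt (fun z (i : s) => v z i) x :=
      continuousAt_pi.2 fun i => continuousAt_pi.1 hv i
    exact hcont.eventually (LinearIndependent.eventually hLI)
  refine ⟨s, hLI, ?_⟩
  filter_upwards [hLI_near, hrank] with z hzLI hzrank
  have := FiniteDimensional.span_of_finite ℝ (Set.finite_range (v z))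
  have := FiniteDimensional.span_of_finite ℝ (Set.finite_range fun i : s => v x i)
  refine Submodule.eq_of_le_of_finrank_le
    (Submodule.span_mono (Set.range_comp_subset_range _ (v z))) ?_
  rw [finrank_span_eq_card hzLI, ← finrank_span_eq_card hLI]
  refine hzrank.le.trans (Submodule.finrank_mono (Submodule.span_le.2 ?_))
  rwa [← Set.image_univ, ← Set.image_eq_range]

theorem isLittleO_sub_of_fderiv_mem_span_of_finrank_eventually_eq [CompleteSpace E] {κ : Type*}
    [Fintype κ] {f : κ → E → ℝ} {ψ : E → ℝ} {x : E} (hf : ∀ t, ContDiffAt ℝ 1 (f t) x)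
    (hψ : ContDiffAt ℝ 1 ψ x)
    (hrank : ∀ᶠ z in 𝓝 x, (Set.range fun t => fderiv ℝ (f t) z).finrank ℝ =
      (Set.range fun t => fderiv ℝ (f t) x).finrank ℝ)
    (hspan : ∀ᶠ z in 𝓝 x,
      fderiv ℝ ψ z ∈ Submodule.span ℝ (Set.range fun t => fderiv ℝ (f t) z))
    (hψ' : fderiv ℝ ψ x = 0) :
    (fun z => ψ z - ψ x) =o[𝓝 x] fun z t => f t z - f t x := by
  obtain ⟨s, hLI, hspan_s⟩ := exists_linearIndependent_eventually_span_eq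
    (continuousAt_pi.2 fun t => (hf t).continuousAt_fderiv one_ne_zero) hrank
  cases nonempty_fintype s
  let Φ (z : E) (i : s) : ℝ := f i z
  have hΦ' : ∀ᶠ z in 𝓝 x, fderiv ℝ Φ z = .pi fun i => fderiv ℝ (f i) z := by
    have hdiff : ∀ᶠ z in 𝓝 x, ∀ i : s, DifferentiableAt ℝ (f i) z := eventually_all.2 fun i =>
      ((hf i).eventually (by simp)).mono fun z hz => hz.differentiableAt one_ne_zero
    filter_upwards [hdiff] with z hz
    exact (hasFDerivAt_pi.2 fun i : s => (hz i).hasFDerivAt).fderiv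
  have hinv : (fderiv ℝ Φ x).HasRightInverse := by
    refine .of_surjective_of_finiteDimensional ?_
    rw [hΦ'.self_of_nhds]
    exact surjective_pi_of_linearIndependent (hLI.map' (ContinuousLinearMap.coeLM ℝ)
      (LinearMap.ker_eq_bot.2 ContinuousLinearMap.coe_injective))
  have hker : ∀ᶠ z in 𝓝 x, ∀ v, fderiv ℝ Φ z v = 0 → fderiv ℝ ψ z v = 0 := by
    filter_upwards [hspan, hspan_s, hΦ'] with z hz hzs hzΦ v hv
    rw [hzΦ] at hv
    rw [← hzs] at hz
    refine (Submodule.span_le (p := (ContinuousLinearMap.apply ℝ ℝ v).ker)).2 ?_ hz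
    rintro _ ⟨i, rfl⟩
    exact congr_fun hv i
  refine (isLittleO_sub_of_ker_fderiv_le (contDiffAt_pi.2 fun i : s => hf i) hψ hinv hker
    hψ').trans_isBigO (Asymptotics.isBigO_pi.2 fun i => ?_)
  exact Asymptotics.isBigO_pi.1 (Asymptotics.isBigO_refl (fun z t => f t z - f t x) (𝓝 x)) i

end FunctionalDependence

/-- A system of `C¹` inequality and equality constraints, `fn t z ≤ 0` for `t ∈ ineq` and
`fn t z = 0` for `t ∉ ineq`. -/
structure ConstraintSystem (E σ : Type*) [NormedAddCommGroup E] [NormedSpace ℝ E] where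
  fn : σ → E → ℝ
  ineq : Set σ
  contDiff : ∀ t, ContDiff ℝ 1 (fn t)

namespace ConstraintSystem

variable {E σ : Type*} [NormedAddCommGroup E] [NormedSpace ℝ E] (C : ConstraintSystem E σ) {x : E}

/-- The feasible set of the system. -/
def feasible : Set E := {z | (∀ t ∈ C.ineq, C.fn t z ≤ 0) ∧ ∀ t ∉ C.ineq, C.fn t z = 0}

/-- The vector of constraint violations; the entries of equality constraints keep their sign. -/
def violation (z : E) : EuclideanSpace ℝ σ :=
  WithLp.toLp 2 fun t => if t ∈ C.ineq then max (C.fn t z) 0 else C.fn t z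

variable {C}

theorem violation_of_mem {t : σ} (ht : t ∈ C.ineq) (z : E) :
    C.violation z t = max (C.fn t z) 0 := if_pos ht

theorem violation_of_notMem {t : σ} (ht : t ∉ C.ineq) (z : E) :
    C.violation z t = C.fn t z := if_neg ht

theorem violation_eq_zero_iff {z : E} : C.violation z = 0 ↔ z ∈ C.feasible := by
  rw [feasible, Set.mem_ofPred_eq, PiLp.ext_iff, ← forall_and]
  refine forall_congr' fun t => ?_
  by_cases ht : t ∈ C.ineq <;> simp [ht, violation_of_mem, violation_of_notMem]

theorem fn_le_violation (t : σ) (z : E) : C.fn t z ≤ C.violation z t := by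
  by_cases ht : t ∈ C.ineq
  · exact (le_max_left _ _).trans_eq (violation_of_mem ht z).symm
  · exact (violation_of_notMem ht z).ge

theorem violation_eq_fn_of_pos {t : σ} {z : E} {a : ℝ} (ha : t ∈ C.ineq → 0 ≤ a)
    (h : 0 < a * C.violation z t) : C.violation z t = C.fn t z := by
  by_cases ht : t ∈ C.ineq
  · have hpos : 0 < C.violation z t := pos_of_mul_pos_right h (ha ht)
    rw [violation_of_mem ht] at hpos ⊢
    exact max_eq_left (not_lt.1 fun hneg => by simp [hneg.le] at hpos)
  · exact violation_of_notMem ht z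

theorem continuous_violation : Continuous C.violation := by
  refine (PiLp.continuous_toLp 2 _).comp (continuous_pi fun t => ?_)
  have := (C.contDiff t).continuous
  split_ifs <;> fun_prop

theorem hasFDerivAt_violation_sq (t : σ) (z : E) :
    HasFDerivAt (fun z => C.violation z t ^ 2)
      ((2 * C.violation z t) • fderiv ℝ (C.fn t) z) z := by
  have hfn : HasFDerivAt (C.fn t) (fderiv ℝ (C.fn t) z) z :=
    ((C.contDiff t).differentiable one_ne_zero z).hasFDerivAt
  by_cases ht : t ∈ C.ineq
  · simp only [violation_of_mem ht]
    exact (hasDerivAt_max_zero_sq _).comp_hasFDerivAt z hfn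
  · simp only [violation_of_notMem ht]
    simpa [pow_one] using hfn.pow 2

variable (C) [Fintype σ]

/-- The local error bound property: near `x`, the distance to the feasible set is at most a
constant times the violation. -/
def HasErrorBoundAt (x : E) : Prop :=
  (fun z => Metric.infDist z C.feasible) =O[𝓝 x] C.violation

/-- Abnormal multipliers at `x`: the Fritz John multipliers in which the objective has
coefficient `0`. -/
structure IsAbnormalMultiplier (x : E) (c : σ → ℝ) : Prop where
  nonneg : ∀ t ∈ C.ineq, 0 ≤ c t
  eq_zero_of_ne : ∀ t, C.fn t x ≠ 0 → c t = 0
  sum_eq_zero : ∑ t, c t • fderiv ℝ (C.fn t) x = 0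

/-- Quasi-normality at `x`: a nonzero abnormal multiplier does not have the sign pattern of the
constraint values at points arbitrarily close to `x`. -/
def IsQuasiNormalAt (x : E) : Prop :=
  ∀ c, C.IsAbnormalMultiplier x c →
    (∃ᶠ z in 𝓝 x, ∀ t, c t ≠ 0 → 0 < c t * C.fn t z) → c = 0

/-- The inequality constraints that carry a positive abnormal multiplier at `x`. This is the
index set `I⁻`: divide by the multiplier to express `-∇g_l` through the other gradients. -/
def degenerate (x : E) : Set σ := {t ∈ C.ineq | ∃ c, C.IsAbnormalMultiplier x c ∧ 0 < c t}

/-- The constant rank of the subspace component condition (CRSC) at `x`. -/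
def IsCRSCAt (x : E) : Prop :=
  ∀ᶠ z in 𝓝 x, ((fun t => fderiv ℝ (C.fn t) z) '' (C.degenerate x ∪ C.ineqᶜ)).finrank ℝ =
    ((fun t => fderiv ℝ (C.fn t) x) '' (C.degenerate x ∪ C.ineqᶜ)).finrank ℝ

variable {C}

theorem hasFDerivAt_norm_violation {z : E} (hz : C.violation z ≠ 0) :
    HasFDerivAt (fun z => ‖C.violation z‖)
      (∑ t, NormedSpace.normalize (C.violation z) t • fderiv ℝ (C.fn t) z) z := by
  have hsum : HasFDerivAt (fun z => ‖C.violation z‖ ^ 2)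
      (∑ t, (2 * C.violation z t) • fderiv ℝ (C.fn t) z) z := by
    simp only [EuclideanSpace.real_norm_sq_eq]
    exact HasFDerivAt.fun_sum fun t _ => hasFDerivAt_violation_sq t z
  convert hsum.sqrt (by simpa using hz) using 1
  · simp [Real.sqrt_sq]
  · rw [Finset.smul_sum]
    refine Finset.sum_congr rfl fun t _ => ?_
    rw [Real.sqrt_sq (norm_nonneg _), smul_smul, NormedSpace.normalize, PiLp.smul_apply,
      smul_eq_mul]
    congr 1
    field_simp

theorem mapClusterPt_zero_of_not_hasErrorBoundAt [ProperSpace E] (hx : x ∈ C.feasible)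
    (h : ¬C.HasErrorBoundAt x) :
    MapClusterPt 0 (𝓝[C.feasibleᶜ] x)
      fun y => ∑ t, NormedSpace.normalize (C.violation y) t • fderiv ℝ (C.fn t) y := by
  refine Metric.nhds_basis_closedBall.mapClusterPt_iff_frequently.2 fun ε hε => ?_
  contrapose! h
  have hdesc : ∀ᶠ y in 𝓝 x, 0 < ‖C.violation y‖ →
      ∃ u, ‖C.violation u‖ + ε * dist u y < ‖C.violation y‖ := by
    filter_upwards [eventually_nhdsWithin_iff.1 h] with y hy hpos
    have hne : C.violation y ≠ 0 := norm_pos_iff.1 hpos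
    contrapose! hy
    exact ⟨violation_eq_zero_iff.not.1 hne, mem_closedBall_zero_iff.2 <|
      norm_le_of_hasFDerivAt_of_forall_le_add_mul_dist hε.le (hasFDerivAt_norm_violation hne)
        (.of_forall hy)⟩
  have hbound := eventually_infDist_zeros_le_of_eventually_descent continuous_violation.norm
    (fun y => norm_nonneg _) (by simpa [violation_eq_zero_iff] using hx) hε hdesc
  simp only [norm_eq_zero, violation_eq_zero_iff, Set.ofPred_mem_eq] at hbound
  refine .of_bound ε⁻¹ ?_
  filter_upwards [hbound] with z hz
  rwa [Real.norm_of_nonneg Metric.infDist_nonneg, inv_mul_eq_div]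

theorem isAbnormalMultiplier_of_tendsto {l : Filter E} [l.NeBot] (hl : l ≤ 𝓝 x)
    (hx : x ∈ C.feasible) {c : EuclideanSpace ℝ σ}
    (hc : Tendsto (fun y => NormedSpace.normalize (C.violation y)) l (𝓝 c))
    (hgrad : Tendsto
      (fun y => ∑ t, NormedSpace.normalize (C.violation y) t • fderiv ℝ (C.fn t) y) l (𝓝 0)) :
    C.IsAbnormalMultiplier x c := by
  have hct (t : σ) : Tendsto (fun y => NormedSpace.normalize (C.violation y) t) l (𝓝 (c t)) :=
    ((PiLp.continuous_apply 2 _ t).tendsto c).comp hc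
  refine ⟨fun t ht => ge_of_tendsto' (hct t) fun y => ?_, fun t ht => ?_, ?_⟩
  · rw [NormedSpace.normalize, PiLp.smul_apply, violation_of_mem ht]
    positivity
  · have htI : t ∈ C.ineq := not_not.1 (mt (hx.2 t) ht)
    have hneg : ∀ᶠ y in l, C.fn t y < 0 :=
      hl ((C.contDiff t).continuous.continuousAt.eventually_lt continuousAt_const
        ((hx.1 t htI).lt_of_ne ht))
    refine tendsto_nhds_unique (hct t) (tendsto_const_nhds.congr' ?_)
    filter_upwards [hneg] with y hy
    simp [NormedSpace.normalize, violation_of_mem htI, hy.le]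
  · refine tendsto_nhds_unique (tendsto_finsetSum _ fun t _ => (hct t).smul ?_) hgrad
    exact (((C.contDiff t).continuous_fderiv one_ne_zero).tendsto x).mono_left hl

theorem exists_isAbnormalMultiplier_of_not_hasErrorBoundAt [ProperSpace E] (hx : x ∈ C.feasible)
    (h : ¬C.HasErrorBoundAt x) :
    ∃ (l : Ultrafilter E) (c : EuclideanSpace ℝ σ), ↑l ≤ 𝓝 x ∧ ‖c‖ = 1 ∧
      C.IsAbnormalMultiplier x c ∧
      Tendsto (fun y => NormedSpace.normalize (C.violation y)) l (𝓝 c) := by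
  obtain ⟨l, hl, hgrad⟩ :=
    mapClusterPt_iff_ultrafilter.1 (mapClusterPt_zero_of_not_hasErrorBoundAt hx h)
  obtain ⟨hlx, hlS⟩ := le_inf_iff.1 hl
  have hunit : ∀ᶠ y in (l : Filter E),
      NormedSpace.normalize (C.violation y) ∈ Metric.sphere (0 : EuclideanSpace ℝ σ) 1 := by
    filter_upwards [le_principal_iff.1 hlS] with y hy
    rw [mem_sphere_zero_iff_norm, NormedSpace.norm_normalize_eq_one_iff]
    exact violation_eq_zero_iff.not.2 hy
  obtain ⟨c, hc, hlc⟩ := (isCompact_sphere (0 : EuclideanSpace ℝ σ) 1).ultrafilter_le_nhds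
    (l.map fun y => NormedSpace.normalize (C.violation y)) (le_principal_iff.2 hunit)
  exact ⟨l, c, hlx, mem_sphere_zero_iff_norm.1 hc,
    isAbnormalMultiplier_of_tendsto hlx hx hlc hgrad, hlc⟩

theorem eventually_pos_mul_violation_of_tendsto {l : Filter E} {c : EuclideanSpace ℝ σ}
    (hc : Tendsto (fun y => NormedSpace.normalize (C.violation y)) l (𝓝 c)) :
    ∀ᶠ y in l, ∀ t, c t ≠ 0 → 0 < c t * C.violation y t := by
  refine eventually_all.2 fun t => eventually_imp_distrib_left.2 fun ht => ?_
  have hct : Tendsto (fun y => c t * NormedSpace.normalize (C.violation y) t) l (𝓝 (c t * c t)) :=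
    (((PiLp.continuous_apply 2 _ t).tendsto c).comp hc).const_mul _
  filter_upwards [hct.eventually_const_lt (mul_self_pos.2 ht)] with y hy
  rw [NormedSpace.normalize, PiLp.smul_apply, smul_eq_mul, mul_left_comm] at hy
  exact pos_of_mul_pos_right hy (by positivity)

theorem IsQuasiNormalAt.hasErrorBoundAt [ProperSpace E] (h : C.IsQuasiNormalAt x)
    (hx : x ∈ C.feasible) : C.HasErrorBoundAt x := by
  by_contra hEB
  obtain ⟨l, c, hl, hc1, hc, hlc⟩ := exists_isAbnormalMultiplier_of_not_hasErrorBoundAt hx hEB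
  have hsign : ∀ᶠ y in (l : Filter E), ∀ t, c t ≠ 0 → 0 < c t * C.fn t y := by
    filter_upwards [eventually_pos_mul_violation_of_tendsto hlc] with y hy t ht
    rw [← violation_eq_fn_of_pos (hc.nonneg t) (hy t ht)]
    exact hy t ht
  have hc0 : c = 0 := PiLp.ext (congr_fun (h c hc (hsign.frequently.filter_mono hl)))
  simp [hc0] at hc1

theorem hasErrorBoundAt_of_forall_isLittleO [ProperSpace E] (hx : x ∈ C.feasible)
    (h : ∀ c, C.IsAbnormalMultiplier x c → (fun z => ∑ t, c t * C.fn t z) =o[𝓝 x] C.violation) :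
    C.HasErrorBoundAt x := by
  by_contra hEB
  obtain ⟨l, c, hl, hc1, hc, hlc⟩ := exists_isAbnormalMultiplier_of_not_hasErrorBoundAt hx hEB
  have hzero : Tendsto (fun y => (∑ t, c t * C.fn t y) / ‖C.violation y‖) l (𝓝 0) :=
    ((h c hc).mono hl).norm_right.tendsto_div_nhds_zero
  have hone : Tendsto (fun y => ⟪NormedSpace.normalize (C.violation y), c⟫_ℝ) l (𝓝 1) := by
    simpa [hc1] using hlc.inner tendsto_const_nhds (𝕜 := ℝ) (y := c)
  refine zero_ne_one (tendsto_nhds_unique hzero (hone.congr' ?_))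
  filter_upwards [eventually_pos_mul_violation_of_tendsto hlc] with y hy
  rw [NormedSpace.normalize, real_inner_smul_left, inv_mul_eq_div, PiLp.inner_apply]
  congr 1
  refine Finset.sum_congr rfl fun t _ => ?_
  rcases eq_or_ne (c t) 0 with ht | ht
  · simp [ht]
  · simp [violation_eq_fn_of_pos (hc.nonneg t) (hy t ht)]

end ConstraintSystem

namespace ConstraintSystem

variable {E σ : Type*} [NormedAddCommGroup E] [NormedSpace ℝ E] [Fintype σ]
  {C : ConstraintSystem E σ} {x : E}

theorem mem_degenerate_iff_exists_eq_one {t : σ} :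
    t ∈ C.degenerate x ↔ t ∈ C.ineq ∧ ∃ c, C.IsAbnormalMultiplier x c ∧ c t = 1 := by
  refine and_congr_right fun _ => ⟨fun ⟨c, hc, hpos⟩ => ⟨(c t)⁻¹ • c, ⟨?_, ?_, ?_⟩, ?_⟩,
    fun ⟨c, hc, h1⟩ => ⟨c, hc, h1 ▸ one_pos⟩⟩
  · exact fun s hs => mul_nonneg (inv_nonneg.2 hpos.le) (hc.nonneg s hs)
  · exact fun s hs => by simp [hc.eq_zero_of_ne s hs]
  · simp [mul_smul, ← Finset.smul_sum, hc.sum_eq_zero]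
  · exact inv_mul_cancel₀ hpos.ne'

theorem isAbnormalMultiplier_sum {ι : Type*} {s : Finset ι} {c : ι → σ → ℝ}
    (h : ∀ i ∈ s, C.IsAbnormalMultiplier x (c i)) : C.IsAbnormalMultiplier x (∑ i ∈ s, c i) where
  nonneg t ht := by
    rw [Finset.sum_apply]
    exact Finset.sum_nonneg fun i hi => (h i hi).nonneg t ht
  eq_zero_of_ne t ht := by
    rw [Finset.sum_apply]
    exact Finset.sum_eq_zero fun i hi => (h i hi).eq_zero_of_ne t ht
  sum_eq_zero := by
    simp only [Finset.sum_apply, Finset.sum_smul]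
    rw [Finset.sum_comm]
    exact Finset.sum_eq_zero fun i hi => (h i hi).sum_eq_zero

theorem exists_isAbnormalMultiplier_forall_degenerate_pos :
    ∃ μ, C.IsAbnormalMultiplier x μ ∧ ∀ t ∈ C.degenerate x, 0 < μ t := by
  choose! c hc hpos using fun t (ht : t ∈ C.degenerate x) => ht.2
  refine ⟨∑ t with t ∈ C.degenerate x, c t, isAbnormalMultiplier_sum fun t ht =>
    hc t (Finset.mem_filter_univ t |>.1 ht), fun t ht => ?_⟩
  rw [Finset.sum_apply]
  refine Finset.sum_pos' (fun s hs => ?_) ⟨t, Finset.mem_filter_univ t |>.2 ht, hpos t ht⟩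
  exact (hc s (Finset.mem_filter_univ s |>.1 hs)).nonneg t ht.1

theorem IsAbnormalMultiplier.eq_zero_of_notMem {c : σ → ℝ} (hc : C.IsAbnormalMultiplier x c)
    {t : σ} (ht : t ∉ C.degenerate x ∪ C.ineqᶜ) : c t = 0 := by
  rw [Set.mem_union, Set.mem_compl_iff, not_or, not_not] at ht
  by_contra hne
  exact ht.1 ⟨ht.2, c, hc, (hc.nonneg t ht.2).lt_of_ne' hne⟩

theorem isBigO_fn {μ : σ → ℝ} (hμ : ∀ t ∈ C.ineq, 0 ≤ μ t) {t : σ} (ht : t ∈ C.ineq → 0 < μ t)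
    (l : Filter E) :
    C.fn t =O[l] fun z => ‖C.violation z‖ + ‖∑ s, μ s * C.fn s z‖ := by
  have hentry (s : σ) : (C.violation · s) =O[l] C.violation :=
    (Asymptotics.IsBigO.of_norm_le fun z => PiLp.norm_apply_le (C.violation z) s).of_norm_right
  have hV : C.violation =O[l] fun z => ‖C.violation z‖ + ‖∑ s, μ s * C.fn s z‖ :=
    .of_norm_le fun z => le_add_of_nonneg_right (norm_nonneg _)
  by_cases htI : t ∈ C.ineq
  swap
  · exact ((hentry t).trans hV).congr_left (violation_of_notMem htI)
  have hgap (s : σ) (z : E) : 0 ≤ μ s * (C.violation z s - C.fn s z) := by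
    by_cases hs : s ∈ C.ineq
    · exact mul_nonneg (hμ s hs) (sub_nonneg.2 (fn_le_violation s z))
    · simp [violation_of_notMem hs]
  have hle (z : E) : ‖C.violation z t - C.fn t z‖ ≤
      (μ t)⁻¹ * ‖∑ s, μ s * C.violation z s - ∑ s, μ s * C.fn s z‖ := by
    rw [Real.norm_of_nonneg (sub_nonneg.2 (fn_le_violation t z)), le_inv_mul_iff₀ (ht htI),
      ← Finset.sum_sub_distrib]
    simp only [← mul_sub]
    exact (Finset.single_le_sum (fun s _ => hgap s z) (Finset.mem_univ t)).trans (le_abs_self _)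
  have hsum : (fun z => ∑ s, μ s * C.violation z s) =O[l] C.violation :=
    .fun_sum fun s _ => (hentry s).const_mul_left _
  have hdiff := (Asymptotics.IsBigO.of_bound _ (.of_forall hle)).trans
    ((hsum.trans hV).sub (.of_norm_le fun z => le_add_of_nonneg_left (norm_nonneg _)))
  exact (((hentry t).trans hV).sub hdiff).congr_left fun z => sub_sub_cancel _ _

theorem IsCRSCAt.isLittleO_sum_mul_fn [CompleteSpace E] (h : C.IsCRSCAt x) (hx : x ∈ C.feasible)
    {c : σ → ℝ} (hc : C.IsAbnormalMultiplier x c) :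
    (fun z => ∑ t, c t * C.fn t z) =o[𝓝 x]
      fun z (t : ↥(C.degenerate x ∪ C.ineqᶜ)) => C.fn t z := by
  set D := C.degenerate x ∪ C.ineqᶜ
  have hψ' (z : E) :
      fderiv ℝ (fun z => ∑ t, c t * C.fn t z) z = ∑ t, c t • fderiv ℝ (C.fn t) z :=
    (HasFDerivAt.fun_sum fun t _ =>
      (((C.contDiff t).differentiable one_ne_zero z).hasFDerivAt.const_mul (c t))).fderiv
  have hψx : ∑ t, c t * C.fn t x = 0 := Finset.sum_eq_zero fun t _ =>
    mul_eq_zero.2 (or_iff_not_imp_right.2 (hc.eq_zero_of_ne t))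
  have hfx (t : D) : C.fn t x = 0 := by
    rcases t.2 with ⟨-, c', hc', hpos⟩ | ht
    · exact not_not.1 fun hne => hpos.ne' (hc'.eq_zero_of_ne t hne)
    · exact hx.2 t ht
  have hspan (z : E) : fderiv ℝ (fun z => ∑ t, c t * C.fn t z) z ∈
      Submodule.span ℝ (Set.range fun t : D => fderiv ℝ (C.fn t) z) := by
    rw [hψ']
    refine sum_mem fun t _ => ?_
    by_cases ht : t ∈ D
    · exact Submodule.smul_mem _ _ (Submodule.subset_span ⟨⟨t, ht⟩, rfl⟩)
    · simp [hc.eq_zero_of_notMem ht]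
  simp only [IsCRSCAt, Set.image_eq_range] at h
  simpa [hψx, hfx] using isLittleO_sub_of_fderiv_mem_span_of_finrank_eventually_eq
    (fun t : D => (C.contDiff t).contDiffAt)
    (ContDiff.sum fun t _ => contDiff_const.mul (C.contDiff t)).contDiffAt h (.of_forall hspan)
    ((hψ' x).trans hc.sum_eq_zero)

theorem IsCRSCAt.isLittleO_violation [CompleteSpace E] (h : C.IsCRSCAt x) (hx : x ∈ C.feasible)
    {c : σ → ℝ} (hc : C.IsAbnormalMultiplier x c) :
    (fun z => ∑ t, c t * C.fn t z) =o[𝓝 x] C.violation := by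
  obtain ⟨μ, hμ, hpos⟩ := C.exists_isAbnormalMultiplier_forall_degenerate_pos (x := x)
  have hfn : (fun z (t : ↥(C.degenerate x ∪ C.ineqᶜ)) => C.fn t z) =O[𝓝 x]
      fun z => ‖C.violation z‖ + ‖∑ s, μ s * C.fn s z‖ :=
    Asymptotics.isBigO_pi.2 fun t => isBigO_fn hμ.nonneg
      (fun ht => hpos t (t.2.resolve_right (not_not.2 ht))) _
  -- The `μ`-sum is little-o of `fn`, so the bound of `fn` by the violation plus the `μ`-sum can
  -- absorb that sum into its left-hand side.
  have habsorb := ((h.isLittleO_sum_mul_fn hx hμ).norm_left.trans_isBigO hfn).right_isBigO_sub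
  simp only [add_sub_cancel_right] at habsorb
  exact (h.isLittleO_sum_mul_fn hx hc).trans_isBigO (hfn.trans habsorb.of_norm_right)

theorem IsCRSCAt.hasErrorBoundAt [ProperSpace E] (h : C.IsCRSCAt x) (hx : x ∈ C.feasible) :
    C.HasErrorBoundAt x :=
  hasErrorBoundAt_of_forall_isLittleO hx fun _ hc => h.isLittleO_violation hx hc

end ConstraintSystem

namespace MPSC

variable {n p q m : ℕ} (P : MPSC n p q m) {b : Set (Fin m)} {z zs : Euc n}

/-- The branch problem `NLP(β₁, β₂)` with `I_G* ∪ β₁ = b` and `I_H* ∪ β₂ = bᶜ`. -/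
def branch (b : Set (Fin m)) : ConstraintSystem (Euc n) (Fin p ⊕ Fin q ⊕ Fin m) where
  fn := Sum.elim P.g (Sum.elim P.h (b.piecewise P.G P.H))
  ineq := Set.range Sum.inl
  contDiff := by
    rintro (i | j | i)
    · exact contDiff_one_of_hasGradientAt (P.grad_g i) (P.cont_g' i)
    · exact contDiff_one_of_hasGradientAt (P.grad_h j) (P.cont_h' j)
    · by_cases hi : i ∈ b
      · simpa [hi] using contDiff_one_of_hasGradientAt (P.grad_G i) (P.cont_G' i)
      · simpa [hi] using contDiff_one_of_hasGradientAt (P.grad_H i) (P.cont_H' i)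

/-- The gradients of the constraint functions of `P.branch b`. -/
def branchGrad (b : Set (Fin m)) (z : Euc n) : Fin p ⊕ Fin q ⊕ Fin m → Euc n :=
  Sum.elim (P.g' · z) (Sum.elim (P.h' · z) (b.piecewise (P.G' · z) (P.H' · z)))

variable {P}

theorem hasGradientAt_branch (b : Set (Fin m)) (t : Fin p ⊕ Fin q ⊕ Fin m) (z : Euc n) :
    HasGradientAt ((P.branch b).fn t) (P.branchGrad b z t) z := by
  rcases t with i | j | i
  · exact P.grad_g i z
  · exact P.grad_h j z
  · by_cases hi : i ∈ b
    · simpa [branch, branchGrad, hi] using P.grad_G i z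
    · simpa [branch, branchGrad, hi] using P.grad_H i z

theorem fderiv_branch (b : Set (Fin m)) (t : Fin p ⊕ Fin q ⊕ Fin m) (z : Euc n) :
    fderiv ℝ ((P.branch b).fn t) z = InnerProductSpace.toDual ℝ (Euc n) (P.branchGrad b z t) :=
  (hasGradientAt_branch b t z).hasFDerivAt.fderiv

theorem mem_feasible_branch : z ∈ (P.branch b).feasible ↔
    (∀ i, P.g i z ≤ 0) ∧ (∀ j, P.h j z = 0) ∧ ∀ i, b.piecewise P.G P.H i z = 0 := by
  simp [ConstraintSystem.feasible, branch]

theorem feasible_branch_subset : (P.branch b).feasible ⊆ P.Feas := by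
  intro z hz
  obtain ⟨hg, hh, hGH⟩ := mem_feasible_branch.1 hz
  refine ⟨hg, hh, fun i => mul_eq_zero.2 ?_⟩
  by_cases hi : i ∈ b
  · exact .inl (by simpa [hi] using hGH i)
  · exact .inr (by simpa [hi] using hGH i)

theorem IGs_union_inter (hb : zs ∈ (P.branch b).feasible) : P.IGs zs ∪ P.IGH zs ∩ b = b := by
  ext i
  have hi := (mem_feasible_branch.1 hb).2.2 i
  by_cases hib : i ∈ b
  · have hG : P.G i zs = 0 := by simpa [hib] using hi
    simp [IGs, IGH, hib, hG, em']
  · have hH : P.H i zs = 0 := by simpa [hib] using hi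
    simp [IGs, IGH, hib, hH]

theorem IHs_union_diff (hb : zs ∈ (P.branch b).feasible) : P.IHs zs ∪ P.IGH zs \ b = bᶜ := by
  ext i
  have hi := (mem_feasible_branch.1 hb).2.2 i
  by_cases hib : i ∈ b
  · have hG : P.G i zs = 0 := by simpa [hib] using hi
    simp [IHs, IGH, hib, hG]
  · have hH : P.H i zs = 0 := by simpa [hib] using hi
    simp [IHs, IGH, hib, hH, em']

theorem isAbnormalMultiplier_branch_iff (hb : zs ∈ (P.branch b).feasible)
    {c : Fin p ⊕ Fin q ⊕ Fin m → ℝ} : (P.branch b).IsAbnormalMultiplier zs c ↔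
      (∀ i, 0 ≤ c (.inl i)) ∧ (∀ i ∉ P.Ig zs, c (.inl i) = 0) ∧
        0 = ∑ i, c (.inl i) • P.g' i zs + ∑ j, c (.inr (.inl j)) • P.h' j zs +
          ∑ i, (b.indicator (fun i => c (.inr (.inr i))) i • P.G' i zs +
            bᶜ.indicator (fun i => c (.inr (.inr i))) i • P.H' i zs) := by
  have hsum : ∑ t, c t • fderiv ℝ ((P.branch b).fn t) zs =
      InnerProductSpace.toDual ℝ (Euc n) (∑ t, c t • P.branchGrad b zs t) := by
    simp [fderiv_branch]
  have hpiece (i : Fin m) : c (.inr (.inr i)) • P.branchGrad b zs (.inr (.inr i)) =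
      b.indicator (fun i => c (.inr (.inr i))) i • P.G' i zs +
        bᶜ.indicator (fun i => c (.inr (.inr i))) i • P.H' i zs := by
    by_cases hi : i ∈ b <;> simp [branchGrad, hi]
  have hzero : ∑ t, c t • fderiv ℝ ((P.branch b).fn t) zs = 0 ↔
      0 = ∑ i, c (.inl i) • P.g' i zs + ∑ j, c (.inr (.inl j)) • P.h' j zs +
        ∑ i, (b.indicator (fun i => c (.inr (.inr i))) i • P.G' i zs +
          bᶜ.indicator (fun i => c (.inr (.inr i))) i • P.H' i zs) := by
    rw [hsum, map_eq_zero_iff _ (InnerProductSpace.toDual ℝ (Euc n)).injective, eq_comm,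
      Fintype.sum_sum_type, Fintype.sum_sum_type, ← add_assoc]
    simp only [hpiece]
    rfl
  refine ⟨fun hc => ⟨fun i => hc.nonneg _ ⟨i, rfl⟩, fun i => hc.eq_zero_of_ne (.inl i),
    hzero.1 hc.sum_eq_zero⟩, fun ⟨hnonneg, hinactive, h0⟩ => ⟨?_, ?_, hzero.2 h0⟩⟩
  · rintro _ ⟨i, rfl⟩
    exact hnonneg i
  · rintro (i | t) ht
    · exact hinactive i ht
    · exact absurd (hb.2 _ (by simp [branch])) ht

theorem QuasiNormalDir.isQuasiNormalAt_branch (h : P.QuasiNormalDir zs 0)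
    (hb : zs ∈ (P.branch b).feasible) : (P.branch b).IsQuasiNormalAt zs := by
  intro c hc hfreq
  obtain ⟨hnonneg, hinactive, hsum⟩ := (isAbnormalMultiplier_branch_iff hb).1 hc
  obtain ⟨d, t, hd, ht, ht0, hsign⟩ := exists_seq_add_smul_of_frequently hfreq
  have hIGs : P.IGs zs ⊆ b := IGs_union_inter hb ▸ Set.subset_union_left
  have hIHs : P.IHs zs ⊆ bᶜ := IHs_union_diff hb ▸ Set.subset_union_left
  set ν := fun i => c (.inr (.inr i))
  have hsignG (k : ℕ) (i : Fin m) (hi : b.indicator ν i ≠ 0) :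
      0 < b.indicator ν i * P.G i (zs + t k • d k) := by
    have hib : i ∈ b := Set.mem_of_indicator_ne_zero hi
    simpa [branch, hib] using hsign k (.inr (.inr i)) (by simpa [hib] using hi)
  have hsignH (k : ℕ) (i : Fin m) (hi : bᶜ.indicator ν i ≠ 0) :
      0 < bᶜ.indicator ν i * P.H i (zs + t k • d k) := by
    have hib : i ∉ b := Set.mem_of_indicator_ne_zero hi
    simpa [branch, hib] using hsign k (.inr (.inr i)) (by simpa [hib] using hi)
  obtain ⟨hg, hh, hG, hH⟩ := h _ _ _ _ hsum
    ⟨fun i _ => hnonneg i, fun i hi => hinactive i (by simpa [Ig, Igd] using hi),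
      fun i hi => Set.indicator_of_notMem (not_not.2 (hIGs (by simpa [IGd] using hi))) _,
      fun i hi => Set.indicator_of_notMem (hIHs (by simpa [IHd] using hi)) _,
      fun i _ => by by_cases hi : i ∈ b <;> simp [hi]⟩
    ⟨d, t, hd, ht, ht0, fun k =>
      ⟨fun i => hsign k (.inl i), fun j => hsign k (.inr (.inl j)), hsignG k, hsignH k⟩⟩
  ext (i | j | i)
  · exact congr_fun hg i
  · exact congr_fun hh j
  · by_cases hi : i ∈ b
    · simpa [hi] using congr_fun hG i
    · simpa [hi] using congr_fun hH i

theorem isAbnormalMultiplier_branch_elim (hb : zs ∈ (P.branch b).feasible) {lg : Fin p → ℝ}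
    {lh : Fin q → ℝ} {lG lH : Fin m → ℝ} (hlg : ∀ i, 0 ≤ lg i) (hlg0 : ∀ i ∉ P.Ig zs, lg i = 0)
    (hlG : ∀ i ∉ b, lG i = 0) (hlH : ∀ i ∉ bᶜ, lH i = 0)
    (hsum : 0 = ∑ i, lg i • P.g' i zs + ∑ j, lh j • P.h' j zs +
      ∑ i, (lG i • P.G' i zs + lH i • P.H' i zs)) :
    (P.branch b).IsAbnormalMultiplier zs (Sum.elim lg (Sum.elim lh (b.piecewise lG lH))) := by
  have hbG : b.indicator (b.piecewise lG lH) = lG := by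
    ext i
    by_cases hi : i ∈ b <;> simp [hi, hlG]
  have hbH : bᶜ.indicator (b.piecewise lG lH) = lH := by
    ext i
    by_cases hi : i ∈ b <;> simp [hi, hlH]
  refine (isAbnormalMultiplier_branch_iff hb).2 ⟨hlg, hlg0, ?_⟩
  simpa only [Sum.elim_inl, Sum.elim_inr, hbG, hbH] using hsum

theorem inl_mem_degenerate_branch_iff (hb : zs ∈ (P.branch b).feasible) {l : Fin p} :
    .inl l ∈ (P.branch b).degenerate zs ↔ l ∈ P.Iminus zs (P.IGH zs ∩ b) (P.IGH zs \ b) := by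
  rw [ConstraintSystem.mem_degenerate_iff_exists_eq_one, Iminus, IGs_union_inter hb,
    IHs_union_diff hb]
  have hupdate (μ : Fin p → ℝ) (a : ℝ) : ∑ i, Function.update μ l a i • P.g' i zs =
      ∑ i, μ i • P.g' i zs + (a - μ l) • P.g' l zs := by
    rw [← Finset.add_sum_erase _ _ (Finset.mem_univ l),
      ← Finset.add_sum_erase _ (fun i => μ i • P.g' i zs) (Finset.mem_univ l),
      Function.update_self, sub_smul, Finset.sum_congr rfl fun i hi => by
        rw [Function.update_of_ne (Finset.ne_of_mem_erase hi)]]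
    abel
  constructor
  · rintro ⟨-, c, hc, hcl⟩
    obtain ⟨hnonneg, hinactive, hsum⟩ := (isAbnormalMultiplier_branch_iff hb).1 hc
    refine ⟨not_not.1 fun hl => by simp [hinactive l hl] at hcl, fun j => c (.inr (.inl j)),
      b.indicator fun i => c (.inr (.inr i)), bᶜ.indicator fun i => c (.inr (.inr i)),
      Function.update (fun i => c (.inl i)) l 0, fun i hi => Set.indicator_of_notMem hi _,
      fun i hi => Set.indicator_of_notMem hi _, fun i => ?_, fun i hi => ?_, ?_⟩
    · rcases eq_or_ne i l with rfl | hil <;> simp [*]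
    · rcases eq_or_ne i l with rfl | hil
      · simp
      · simpa [hil] using hinactive i fun hiI => hi ⟨hiI, hil⟩
    · rw [hupdate, hcl, neg_eq_iff_add_eq_zero, hsum, zero_sub, neg_one_smul]
      abel
  · rintro ⟨hl, lh, lG, lH, μ, hG, hH, hμ, hμ0, hsum⟩
    refine ⟨⟨l, rfl⟩, _, isAbnormalMultiplier_branch_elim (lg := Function.update μ l 1) (lh := lh)
      hb (fun i => ?_) (fun i hi => ?_) hG hH ?_, Function.update_self ..⟩
    · rcases eq_or_ne i l with rfl | hil <;> simp [*]
    · rw [Function.update_of_ne (ne_of_mem_of_not_mem hl hi).symm]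
      exact hμ0 i fun h => hi h.1
    · rw [neg_eq_iff_add_eq_zero] at hsum
      rw [hupdate, hμ0 l fun h => h.2 rfl, sub_zero, one_smul, ← hsum]
      abel

theorem image_fderiv_branch (hb : zs ∈ (P.branch b).feasible) (z : Euc n) :
    (fun t => fderiv ℝ ((P.branch b).fn t) z) ''
        ((P.branch b).degenerate zs ∪ (P.branch b).ineqᶜ) =
      InnerProductSpace.toDual ℝ (Euc n) ''
        ((fun i => P.g' i z) '' P.Iminus zs (P.IGH zs ∩ b) (P.IGH zs \ b) ∪
          P.EqGrads zs (P.IGH zs ∩ b) (P.IGH zs \ b) z) := by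
  have hdeg : (P.branch b).degenerate zs =
      Sum.inl '' P.Iminus zs (P.IGH zs ∩ b) (P.IGH zs \ b) := by
    refine Set.ext fun t => ⟨fun ht => ?_, ?_⟩
    · obtain ⟨l, rfl⟩ := ht.1
      exact ⟨l, (inl_mem_degenerate_branch_iff hb).1 ht, rfl⟩
    · rintro ⟨l, hl, rfl⟩
      exact (inl_mem_degenerate_branch_iff hb).2 hl
  have hineq : (P.branch b).ineqᶜ = Set.range (Sum.inr ∘ Sum.inl) ∪ (Sum.inr ∘ Sum.inr) '' b ∪
      (Sum.inr ∘ Sum.inr) '' bᶜ := by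
    ext (i | j | i) <;> simp [branch, em]
  have hG : (fun i => P.branchGrad b z (.inr (.inr i))) '' b = (fun i => P.G' i z) '' b :=
    Set.image_congr fun i hi => by simp [branchGrad, hi]
  have hH : (fun i => P.branchGrad b z (.inr (.inr i))) '' bᶜ = (fun i => P.H' i z) '' bᶜ :=
    Set.image_congr fun i hi => by simp_all [branchGrad]
  simp only [fderiv_branch, EqGrads, IGs_union_inter hb, IHs_union_diff hb]
  rw [← hG, ← hH, ← Set.image_image (InnerProductSpace.toDual ℝ (Euc n)), hdeg, hineq]
  congr 1
  simp only [Set.image_union, Set.image_image, ← Set.range_comp, Function.comp_def]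
  rfl

theorem PiecewiseCRSC.isCRSCAt_branch (h : P.PiecewiseCRSC zs)
    (hb : zs ∈ (P.branch b).feasible) : (P.branch b).IsCRSCAt zs := by
  obtain ⟨U, hU, hrank⟩ := h (P.IGH zs ∩ b) (P.IGH zs \ b) (Set.inter_union_sdiff _ _)
    (by tauto_set)
  have hfin := finrank_image_linearEquiv
    ((InnerProductSpace.toDual ℝ (Euc n)).toLinearEquiv : Euc n ≃ₗ[ℝ] _)
  filter_upwards [hU] with z hz
  rw [image_fderiv_branch hb, image_fderiv_branch hb]
  exact (hfin _).trans ((hrank z hz).trans (hfin _).symm)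

theorem eventually_mem_feasible_branch (hzs : zs ∈ P.Feas) :
    ∀ᶠ z in 𝓝 zs, zs ∈ (P.branch {i | |P.G i z| ≤ |P.H i z|}).feasible := by
  simp only [mem_feasible_branch, hzs.1, hzs.2.1, implies_true, true_and]
  refine eventually_all.2 fun i => ?_
  have hG : ContinuousAt (fun z => |P.G i z|) zs := (P.grad_G i zs).continuousAt.abs
  have hH : ContinuousAt (fun z => |P.H i z|) zs := (P.grad_H i zs).continuousAt.abs
  by_cases hG0 : P.G i zs = 0
  · by_cases hH0 : P.H i zs = 0
    · refine .of_forall fun z => ?_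
      by_cases hi : |P.G i z| ≤ |P.H i z| <;> simp [Set.piecewise, hi, hG0, hH0]
    · filter_upwards [hG.eventually_lt hH (by simpa [hG0] using hH0)] with z hz
      simp [Set.piecewise, hz.le, hG0]
  · have hH0 : P.H i zs = 0 := (mul_eq_zero.1 (hzs.2.2 i)).resolve_left hG0
    filter_upwards [hH.eventually_lt hG (by simpa [hH0] using hG0)] with z hz
    simp [Set.piecewise, hz.not_ge, hH0]

theorem norm_violation_branch_le (z : Euc n) :
    ‖(P.branch {i | |P.G i z| ≤ |P.H i z|}).violation z‖ ≤ P.residual z := by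
  have hentry (i : Fin m) : |({i | |P.G i z| ≤ |P.H i z|} : Set (Fin m)).piecewise P.G P.H i z| =
      min |P.G i z| |P.H i z| := by
    by_cases hi : |P.G i z| ≤ |P.H i z|
    · simp [Set.piecewise, hi]
    · simp [Set.piecewise, hi, (not_le.1 hi).le]
  have habs (i : Fin p) : |max (P.g i z) 0| = max (P.g i z) 0 := abs_of_nonneg (le_max_right _ _)
  calc ‖(P.branch {i | |P.G i z| ≤ |P.H i z|}).violation z‖
      ≤ ∑ t, ‖(P.branch {i | |P.G i z| ≤ |P.H i z|}).violation z t‖ := by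
        rw [EuclideanSpace.norm_eq, Real.sqrt_le_iff]
        exact ⟨by positivity, Finset.sum_sq_le_sq_sum_of_nonneg fun _ _ => norm_nonneg _⟩
    _ = P.residual z := by
        simp [ConstraintSystem.violation, branch, residual, hentry, habs, add_assoc]

theorem errorBound_of_forall_branch (hzs : zs ∈ P.Feas)
    (h : ∀ b, zs ∈ (P.branch b).feasible → (P.branch b).HasErrorBoundAt zs) :
    P.ErrorBound zs := by
  have hbound (b : Set (Fin m)) : ∃ a : ℝ, zs ∈ (P.branch b).feasible →
      ∀ᶠ z in 𝓝 zs, Metric.infDist z (P.branch b).feasible ≤ a * ‖(P.branch b).violation z‖ := by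
    by_cases hb : zs ∈ (P.branch b).feasible
    · obtain ⟨a, ha⟩ := (h b hb).bound
      exact ⟨a, fun _ => by simpa [Real.norm_of_nonneg Metric.infDist_nonneg] using ha⟩
    · exact ⟨0, fun hb' => absurd hb' hb⟩
  choose a ha using hbound
  obtain ⟨α, hα⟩ := Finite.exists_le a
  have hall : ∀ᶠ z in 𝓝 zs, ∀ b, zs ∈ (P.branch b).feasible →
      Metric.infDist z (P.branch b).feasible ≤ a b * ‖(P.branch b).violation z‖ :=
    eventually_all.2 fun b => eventually_imp_distrib_left.2 (ha b)
  refine ⟨_, hall.and (eventually_mem_feasible_branch hzs), max α 1, by positivity,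
    fun z ⟨hz, hfeas⟩ => ?_⟩
  calc Metric.infDist z P.Feas
      ≤ Metric.infDist z (P.branch {i | |P.G i z| ≤ |P.H i z|}).feasible :=
        Metric.infDist_le_infDist_of_subset feasible_branch_subset ⟨zs, hfeas⟩
    _ ≤ _ := hz _ hfeas
    _ ≤ max α 1 * P.residual z := by
        gcongr
        · exact (hα _).trans (le_max_left _ _)
        · exact norm_violation_branch_le z

theorem zero_mem_linCone (zs : Euc n) : 0 ∈ P.LinCone zs := by simp [LinCone]

theorem residual_eq_zero (hz : z ∈ P.Feas) : P.residual z = 0 := by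
  have hmin (i : Fin m) : min |P.G i z| |P.H i z| = 0 := by
    rcases mul_eq_zero.1 (hz.2.2 i) with h | h <;> simp [h]
  simp [residual, hz.1, hz.2.1, hmin]

end MPSC

/-- exact penalty for the MPSC under directional quasi-normality or
piecewise CRSC. -/
theorem mpsc_exact_penalty {n p q m : ℕ} (P : MPSC n p q m) (zs : Euc n)
    (hfeas : zs ∈ P.Feas) (hmin : IsLocalMinOn P.f P.Feas zs)
    (Lf : ℝ) (hLf : 0 < Lf) (U : Set (Euc n)) (hU : U ∈ 𝓝 zs)
    (hlip : ∀ x ∈ U, ∀ y ∈ U, |P.f x - P.f y| ≤ Lf * ‖x - y‖)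
    (hcq : P.DirQuasiNormal zs ∨ P.PiecewiseCRSC zs) :
    ∃ α > (0 : ℝ),
      (∃ V ∈ 𝓝 zs, ∀ z ∈ V, Metric.infDist z P.Feas ≤ α * P.residual z) ∧
      IsLocalMin (fun z => P.f z + Lf * α * P.residual z) zs := by
  obtain ⟨V, hV, α, hα, hbound⟩ := MPSC.errorBound_of_forall_branch hfeas fun b hb => hcq.elim
    (fun hqn => ((hqn 0 (MPSC.zero_mem_linCone zs)).isQuasiNormalAt_branch hb).hasErrorBoundAt hb)
    (fun hcrsc => (hcrsc.isCRSCAt_branch hb).hasErrorBoundAt hb)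
  refine ⟨α, hα, ⟨V, hV, hbound⟩, ?_⟩
  lift Lf to NNReal using hLf.le
  have hf : LipschitzOnWith Lf P.f U := .of_dist_le_mul fun x hx y hy => by
    rw [Real.dist_eq, dist_eq_norm]
    exact hlip x hx y hy
  filter_upwards [eventually_le_add_mul_infDist_of_isLocalMinOn hf hU hfeas hmin, hV] with z hz hzV
  calc P.f zs + Lf * α * P.residual zs = P.f zs := by rw [MPSC.residual_eq_zero hfeas]; ring
    _ ≤ P.f z + Lf * Metric.infDist z P.Feas := hz
    _ ≤ P.f z + Lf * (α * P.residual z) := by gcongr; exact hbound z hzV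
    _ = P.f z + Lf * α * P.residual z := by ring
end
end

section
/- Let z* be a local optimal solution of the MPSC at which GGCQ holds. Then z* is Q-stationary with respect to every bipartition (β₁, β₂) of I_GH*. -/
open scoped Classical InnerProductSpace
open Filter Topology

noncomputable section

/-!
Since `z*` is a local minimizer, `-∇f(z*)` is a Fréchet normal of the feasible region, so GGCQ
places it in the polar of `L(z*)`. That cone contains the polyhedral linearization cones of both
branch problems `NLP(β₁, β₂)` and `NLP(β₂, β₁)`, and the Farkas lemma yields KKT multipliers `λ`
and `κ` of these two branches. Both represent `-∇f(z*)`, so `μ := λ - κ` lies in `N_SC`. On `β₁`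
the component `κ^G` vanishes, on `β₂` the component `κ^H` does, and `κ^g ≥ 0`; hence `λ` and `μ`
witness Q-stationarity.
-/

section Farkas

open Submodule

variable {𝕜 M N : Type*} [Field 𝕜] [AddCommGroup M] [Module 𝕜 M] [AddCommGroup N] [Module 𝕜 N]
  {p : M →ₗ[𝕜] N →ₗ[𝕜] 𝕜}

variable (p) in
/-- The projection `u ↦ u - (p u x₀ / p a x₀) • a` of `M` along `a` onto the kernel of `p · x₀`, for
`p a x₀ ≠ 0`. In the proof of the Farkas lemma it eliminates the constraint `p a x ≤ 0`. -/
def pairingProjection (a : M) (x₀ : N) : M →ₗ[𝕜] M :=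
  LinearMap.id - ((p a x₀)⁻¹ • p.flip x₀).smulRight a

theorem pairingProjection_apply (a u : M) (x₀ : N) :
    pairingProjection p a x₀ u = u - ((p a x₀)⁻¹ * p u x₀) • a := by
  simp [pairingProjection]

theorem apply_pairingProjection (a u : M) (x₀ x : N) :
    p (pairingProjection p a x₀ u) x = p u (x - ((p a x₀)⁻¹ * p a x) • x₀) := by
  simp only [pairingProjection_apply, map_sub, map_smul, LinearMap.sub_apply, LinearMap.smul_apply,
    smul_eq_mul]
  ring

variable [LinearOrder 𝕜] [IsStrictOrderedRing 𝕜]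

theorem mem_hull_insert_of_pairingProjection_mem {a b : M} {x₀ : N} {s : Set M}
    (ha : 0 ≤ p a x₀) (hs : ∀ u ∈ s, p u x₀ ≤ 0) (hb : 0 ≤ p b x₀)
    (hproj : pairingProjection p a x₀ b ∈ PointedCone.hull 𝕜 (pairingProjection p a x₀ '' s)) :
    b ∈ PointedCone.hull 𝕜 (insert a s) := by
  obtain ⟨y, hy, hyb⟩ : ∃ y ∈ PointedCone.hull 𝕜 s,
      pairingProjection p a x₀ y = pairingProjection p a x₀ b := by
    have hmap : (PointedCone.hull 𝕜 s).map (pairingProjection p a x₀) =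
        PointedCone.hull 𝕜 (pairingProjection p a x₀ '' s) :=
      map_span ((pairingProjection p a x₀).restrictScalars {c : 𝕜 // 0 ≤ c}) s
    rwa [← hmap, PointedCone.mem_map] at hproj
  have hyx₀ : p y x₀ ≤ 0 := by
    have hmem : -x₀ ∈ PointedCone.dual p (PointedCone.hull 𝕜 s) := by
      simpa only [PointedCone.dual_hull, PointedCone.mem_dual, map_neg, neg_nonneg] using @hs
    simpa using hmem hy
  have hcoeff : 0 ≤ (p a x₀)⁻¹ * (p b x₀ - p y x₀) :=
    mul_nonneg (inv_nonneg.2 ha) (sub_nonneg.2 (hyx₀.trans hb))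
  refine mem_span_insert.2 ⟨⟨_, hcoeff⟩, y, hy, ?_⟩
  rw [pairingProjection_apply, pairingProjection_apply, sub_eq_sub_iff_add_eq_add] at hyb
  rw [Nonneg.mk_smul, mul_sub, sub_smul, sub_add_eq_add_sub, add_comm _ y, hyb,
    add_sub_cancel_right]

theorem mem_hull_image_of_forall_apply_nonpos {ι : Type*} (hp : p.SeparatingLeft) (s : Finset ι)
    (a : ι → M) (b : M) (h : ∀ x, (∀ i ∈ s, p (a i) x ≤ 0) → p b x ≤ 0) :
    b ∈ PointedCone.hull 𝕜 (a '' s) := by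
  induction s using Finset.induction_on generalizing a b with
  | empty =>
    have hb : b = 0 := hp b fun x ↦
      le_antisymm (h x (by simp)) (by simpa using h (-x) (by simp))
    exact hb ▸ zero_mem _
  | insert k s _ ih =>
    rw [Finset.coe_insert, Set.image_insert_eq]
    by_cases hs : ∀ x, (∀ i ∈ s, p (a i) x ≤ 0) → p b x ≤ 0
    · exact span_mono (Set.subset_insert _ _) (ih a b hs)
    push Not at hs
    obtain ⟨x₀, hx₀, hbx₀⟩ := hs
    have hkx₀ : 0 < p (a k) x₀ := by
      by_contra! hk
      exact hbx₀.not_ge (h x₀ (by simpa using ⟨hk, hx₀⟩))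
    refine mem_hull_insert_of_pairingProjection_mem hkx₀.le (by simpa using hx₀) hbx₀.le ?_
    rw [← Set.image_comp]
    refine ih _ _ fun x hx ↦ ?_
    rw [apply_pairingProjection]
    refine h _ fun i hi ↦ ?_
    obtain rfl | hi := Finset.mem_insert.1 hi
    · simp [mul_right_comm _ (p (a i) x), hkx₀.ne']
    · exact apply_pairingProjection (p := p) .. ▸ hx i hi

theorem mem_hull_sup_span_of_forall_apply_nonpos (hp : p.SeparatingLeft) {s t : Set M}
    (hs : s.Finite) (ht : t.Finite) (b : M)
    (h : ∀ x, (∀ a ∈ s, p a x ≤ 0) → (∀ c ∈ t, p c x = 0) → p b x ≤ 0) :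
    b ∈ PointedCone.hull 𝕜 s ⊔ (span 𝕜 t).restrictScalars {c : 𝕜 // 0 ≤ c} := by
  have hfin : (s ∪ (t ∪ -t)).Finite := hs.union (ht.union ht.neg)
  have hb : b ∈ PointedCone.hull 𝕜 (s ∪ (t ∪ -t)) := by
    rw [← hfin.coe_toFinset, ← Set.image_id (hfin.toFinset : Set M)]
    refine mem_hull_image_of_forall_apply_nonpos hp _ id b fun x hx ↦ ?_
    simp only [Set.Finite.mem_toFinset] at hx
    refine h x (fun a ha ↦ hx a (.inl ha)) fun c hc ↦ le_antisymm (hx c (.inr (.inl hc))) ?_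
    simpa using hx (-c) (.inr (.inr (by simpa using hc)))
  have hle : PointedCone.hull 𝕜 (t ∪ -t) ≤ (span 𝕜 t).restrictScalars {c : 𝕜 // 0 ≤ c} := by
    refine span_le.2 ?_
    rintro c (hc | hc)
    · exact subset_span hc
    · exact (neg_mem_iff (H := span 𝕜 t)).1 (subset_span hc)
  rw [PointedCone.hull, span_union] at hb
  exact sup_le_sup_left hle _ hb

end Farkas

theorem mem_span_image_iff_exists_forall_notMem_eq_zero {R M ι : Type*} [Semiring R]
    [AddCommMonoid M] [Module R M] [Fintype ι] {v : ι → M} {s : Set ι} {x : M} :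
    x ∈ Submodule.span R (v '' s) ↔ ∃ c : ι → R, (∀ i ∉ s, c i = 0) ∧ ∑ i, c i • v i = x := by
  simp only [Finsupp.mem_span_image_iff_linearCombination, Finsupp.mem_supported']
  exact Finsupp.equivFunOnFinite.exists_congr_left.trans <| by
    simp [Finsupp.linearCombination_apply, Finsupp.sum_fintype]

theorem innerₗ_separatingLeft (E : Type*) [NormedAddCommGroup E] [InnerProductSpace ℝ E] :
    (innerₗ E).SeparatingLeft :=
  fun x hx ↦ inner_self_eq_zero.1 (hx x)

namespace MPSC

variable {n p q m : ℕ} {P : MPSC n p q m} {zs : Euc n} {b1 b2 : Set (Fin m)}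

theorem neg_gradient_mem_frechetNormalCone {f : Euc n → ℝ} {f' x : Euc n} {A : Set (Euc n)}
    (hf : HasGradientAt f f' x) (hmin : IsLocalMinOn f A x) : -f' ∈ frechetNormalCone A x := by
  intro ε hε
  have happrox : ∀ᶠ y in 𝓝 x, ‖f y - f x - ⟪f', y - x⟫_ℝ‖ ≤ ε * ‖y - x‖ :=
    (hasGradientAt_iff_isLittleO.1 hf).def hε
  obtain ⟨δ, hδ, hball⟩ :=
    Metric.eventually_nhds_iff.1 (happrox.and (eventually_nhdsWithin_iff.1 hmin))
  refine ⟨δ, hδ, fun y hy hyδ ↦ ?_⟩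
  obtain ⟨hfy, hxy⟩ := hball (dist_eq_norm y x ▸ hyδ)
  calc ⟪-f', y - x⟫_ℝ = -⟪f', y - x⟫_ℝ := inner_neg_left _ _
    _ ≤ f y - f x - ⟪f', y - x⟫_ℝ := by linarith [hxy hy]
    _ ≤ ε * ‖y - x‖ := (le_abs_self _).trans hfy

variable (P zs) in
/-- The linearization cone at `zs` of the branch problem `NLP(β₁, β₂)`, in which `Gᵢ = 0` is imposed
for `i ∈ I_G* ∪ β₁` and `Hᵢ = 0` for `i ∈ I_H* ∪ β₂`. -/
def BranchLinCone (b1 b2 : Set (Fin m)) : Set (Euc n) :=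
  {d | (∀ i ∈ P.Ig zs, ⟪P.g' i zs, d⟫_ℝ ≤ 0) ∧ ∀ v ∈ P.EqGrads zs b1 b2 zs, ⟪v, d⟫_ℝ = 0}

theorem branchLinCone_subset_linCone (hb : P.IGH zs ⊆ b1 ∪ b2) :
    P.BranchLinCone zs b1 b2 ⊆ P.LinCone zs := by
  rintro d ⟨hg, heq⟩
  have hG (i) (hi : i ∈ P.IGs zs ∪ b1) : ⟪P.G' i zs, d⟫_ℝ = 0 := heq _ (.inl (.inr ⟨i, hi, rfl⟩))
  have hH (i) (hi : i ∈ P.IHs zs ∪ b2) : ⟪P.H' i zs, d⟫_ℝ = 0 := heq _ (.inr ⟨i, hi, rfl⟩)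
  refine ⟨hg, fun j ↦ heq _ (.inl (.inl ⟨j, rfl⟩)), fun i hi ↦ hG i (.inl hi),
    fun i hi ↦ hH i (.inl hi), fun i hi ↦ mul_eq_zero.2 ?_⟩
  exact (hb hi).imp (hG i <| .inr ·) (hH i <| .inr ·)

variable (P zs) in
/-- The constraint part `∑ λᵍ∇g + ∑ λʰ∇h + ∑ (λᴳ∇G + λᴴ∇H)` of the gradient at `zs` of the
Lagrangian of the MPSC, associated in the same way as in `MPSC.InNSC`. -/
def constraintGradient (lg : Fin p → ℝ) (lh : Fin q → ℝ) (lG lH : Fin m → ℝ) : Euc n :=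
  (∑ i, lg i • P.g' i zs) + (∑ j, lh j • P.h' j zs) + ∑ i, (lG i • P.G' i zs + lH i • P.H' i zs)

variable {lg kg : Fin p → ℝ} {lh kh : Fin q → ℝ} {lG lH kG kH : Fin m → ℝ}

theorem constraintGradient_sub :
    P.constraintGradient zs (lg - kg) (lh - kh) (lG - kG) (lH - kH) =
      P.constraintGradient zs lg lh lG lH - P.constraintGradient zs kg kh kG kH := by
  simp only [constraintGradient, Pi.sub_apply, sub_smul, Finset.sum_sub_distrib,
    Finset.sum_add_distrib]
  abel

theorem InRSC.sub (hl : P.InRSC zs lg lh lG lH) (hk : P.InRSC zs kg kh kG kH) :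
    P.InRSC zs (lg - kg) (lh - kh) (lG - kG) (lH - kH) :=
  ⟨fun i hi ↦ by simp [hl.1 i hi, hk.1 i hi], fun i hi ↦ by simp [hl.2.1 i hi, hk.2.1 i hi],
    fun i hi ↦ by simp [hl.2.2 i hi, hk.2.2 i hi]⟩

variable (P zs) in
/-- `(λᵍ, λʰ, λᴳ, λᴴ)` is a KKT multiplier at `zs` for the branch problem `NLP(β₁, β₂)`. Multipliers
of constraints that are inactive or absent from the branch are required to be `0`. -/
structure IsBranchMult (b1 b2 : Set (Fin m)) (lg : Fin p → ℝ) (lh : Fin q → ℝ)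
    (lG lH : Fin m → ℝ) : Prop where
  nonneg : ∀ i, 0 ≤ lg i
  g_eq_zero : ∀ i ∉ P.Ig zs, lg i = 0
  G_eq_zero : ∀ i ∉ P.IGs zs ∪ b1, lG i = 0
  H_eq_zero : ∀ i ∉ P.IHs zs ∪ b2, lH i = 0
  constraintGradient_eq : P.constraintGradient zs lg lh lG lH = -P.f' zs

theorem exists_isBranchMult (hpolar : ∀ d ∈ P.BranchLinCone zs b1 b2, ⟪-P.f' zs, d⟫_ℝ ≤ 0) :
    ∃ lg lh lG lH, P.IsBranchMult zs b1 b2 lg lh lG lH := by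
  have hmem := mem_hull_sup_span_of_forall_apply_nonpos (innerₗ_separatingLeft (Euc n))
    ((P.Ig zs).toFinite.image (P.g' · zs)) (t := P.EqGrads zs b1 b2 zs)
    (((Set.finite_range _).union (Set.toFinite _)).union (Set.toFinite _)) (-P.f' zs)
    fun d hg heq ↦ hpolar d ⟨fun i hi ↦ hg _ ⟨i, hi, rfl⟩, heq⟩
  obtain ⟨yg, hyg, y, hy, hsum⟩ := Submodule.mem_sup.1 hmem
  rw [Submodule.restrictScalars_mem, EqGrads, Submodule.span_union, Submodule.span_union] at hy
  obtain ⟨yhG, hyhG, yH, hyH, rfl⟩ := Submodule.mem_sup.1 hy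
  obtain ⟨yh, hyh, yG, hyG, rfl⟩ := Submodule.mem_sup.1 hyhG
  obtain ⟨lg, hlg, rfl⟩ := mem_span_image_iff_exists_forall_notMem_eq_zero.1 hyg
  obtain ⟨lh, rfl⟩ := (Submodule.mem_span_range_iff_exists_fun ℝ).1 hyh
  obtain ⟨lG, hlG, rfl⟩ := mem_span_image_iff_exists_forall_notMem_eq_zero.1 hyG
  obtain ⟨lH, hlH, rfl⟩ := mem_span_image_iff_exists_forall_notMem_eq_zero.1 hyH
  refine ⟨fun i ↦ lg i, lh, lG, lH, fun i ↦ (lg i).2, fun i hi ↦ by simp [hlg i hi], hlG, hlH, ?_⟩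
  rw [← hsum, constraintGradient, Finset.sum_add_distrib, add_assoc, add_assoc]
  rfl

theorem IsBranchMult.inRSC (hl : P.IsBranchMult zs b1 b2 lg lh lG lH) (hb1 : b1 ⊆ P.IGH zs)
    (hb2 : b2 ⊆ P.IGH zs) : P.InRSC zs lg lh lG lH := by
  refine ⟨hl.g_eq_zero, fun i hi ↦ hl.G_eq_zero i ?_, fun i hi ↦ hl.H_eq_zero i ?_⟩
  · rintro (h | h)
    exacts [hi.1 h.1, hi.1 (hb1 h).1]
  · rintro (h | h)
    exacts [hi.2 h.2, hi.2 (hb2 h).2]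

theorem IsBranchMult.H_eq_zero_of_mem (hl : P.IsBranchMult zs b1 b2 lg lh lG lH)
    (hb1 : b1 ⊆ P.IGH zs) (hd : Disjoint b1 b2) {i : Fin m} (hi : i ∈ b1) : lH i = 0 := by
  refine hl.H_eq_zero i ?_
  rintro (h | h)
  exacts [h.1 (hb1 hi).1, hd.notMem_of_mem_left hi h]

theorem IsBranchMult.G_eq_zero_of_mem (hl : P.IsBranchMult zs b1 b2 lg lh lG lH)
    (hb2 : b2 ⊆ P.IGH zs) (hd : Disjoint b1 b2) {i : Fin m} (hi : i ∈ b2) : lG i = 0 := by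
  refine hl.G_eq_zero i ?_
  rintro (h | h)
  exacts [h.2 (hb2 hi).2, hd.notMem_of_mem_right hi h]

theorem IsBranchMult.qStat (hl : P.IsBranchMult zs b1 b2 lg lh lG lH)
    (hk : P.IsBranchMult zs b2 b1 kg kh kG kH) (hb1 : b1 ⊆ P.IGH zs) (hb2 : b2 ⊆ P.IGH zs)
    (hd : Disjoint b1 b2) : P.QStat zs b1 b2 := by
  have hRSC := hl.inRSC hb1 hb2
  have hμ : P.constraintGradient zs (lg - kg) (lh - kh) (lG - kG) (lH - kH) = 0 := by
    rw [constraintGradient_sub, hl.constraintGradient_eq, hk.constraintGradient_eq, sub_self]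
  refine ⟨lg, lg - kg, lh, lh - kh, lG, lH, lG - kG, lH - kH, hRSC, ?_,
    ⟨hRSC.sub (hk.inRSC hb2 hb1), hμ.symm⟩, fun i _ ↦ ?_, fun i hi ↦ ?_, fun i hi ↦ ?_⟩
  · rw [add_assoc, add_assoc, ← add_assoc (∑ i, _), ← constraintGradient,
      hl.constraintGradient_eq, add_neg_cancel]
  · exact max_le (sub_le_self _ (hk.nonneg i)) (hl.nonneg i)
  · exact ⟨hl.H_eq_zero_of_mem hb1 hd hi, by simp [hk.G_eq_zero_of_mem hb1 hd.symm hi]⟩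
  · exact ⟨hl.G_eq_zero_of_mem hb2 hd hi, by simp [hk.H_eq_zero_of_mem hb2 hd.symm hi]⟩

theorem exists_isBranchMult_of_isLocalMinOn_of_GGCQ (hmin : IsLocalMinOn P.f P.Feas zs)
    (hggcq : P.GGCQ zs) (hb : P.IGH zs ⊆ b1 ∪ b2) :
    ∃ lg lh lG lH, P.IsBranchMult zs b1 b2 lg lh lG lH := by
  have hpolar : ∀ d ∈ P.LinCone zs, ⟪-P.f' zs, d⟫_ℝ ≤ 0 :=
    (Set.ext_iff.1 hggcq _).1 (neg_gradient_mem_frechetNormalCone (P.grad_f zs) hmin)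
  exact exists_isBranchMult fun d hd ↦ hpolar d (branchLinCone_subset_linCone hb hd)

end MPSC

/-- a local minimizer of the MPSC satisfying GGCQ is Q-stationary with
respect to every bipartition of `I_GH*`. -/
theorem mpsc_GGCQ_Q_stationary {n p q m : ℕ} (P : MPSC n p q m) (zs : Euc n)
    (hfeas : zs ∈ P.Feas) (hmin : IsLocalMinOn P.f P.Feas zs) (hggcq : P.GGCQ zs) :
    ∀ b1 b2 : Set (Fin m), b1 ∪ b2 = P.IGH zs → b1 ∩ b2 = ∅ → P.QStat zs b1 b2 := by
  intro b1 b2 hb hd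
  obtain ⟨lg, lh, lG, lH, hl⟩ := MPSC.exists_isBranchMult_of_isLocalMinOn_of_GGCQ hmin hggcq hb.ge
  obtain ⟨kg, kh, kG, kH, hk⟩ := MPSC.exists_isBranchMult_of_isLocalMinOn_of_GGCQ hmin hggcq
    (Set.union_comm b1 b2 ▸ hb.ge)
  exact hl.qStat hk (hb ▸ Set.subset_union_left) (hb ▸ Set.subset_union_right)
    (Set.disjoint_iff_inter_eq_empty.2 hd)
end
end

section
/- Let z* ∈ F be Q-stationary with respect to some bipartition (β₁, β₂) of I_GH* such that every (μ^g, μ^h, μ^G, μ^H) ∈ N_SC satisfies μ_i^G μ_{i'}^G = 0 and μ_i^H μ_{i'}^H = 0 for all (i, i') ∈ β₁ × β₂, μ_i^G μ_{i'}^H = 0 for all (i, i') ∈ β₁ × β₁, and μ_i^G μ_{i'}^H = 0 for all (i, i') ∈ β₂ × β₂. Then z* is S-stationary: there exist multipliers (λ^g, λ^h, λ^G, λ^H) with 0 = ∇f(z*) + Σ_{i∈I_g*} λ_i^g ∇g_i(z*) + Σ_{j=1}^q λ_j^h ∇h_j(z*) + Σ_{i=1}^m (λ_i^G ∇G_i(z*)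 + λ_i^H ∇H_i(z*)), λ_i^g ≥ 0 for i ∈ I_g*, λ_i^G = 0 for i ∈ I_H*, λ_i^H = 0 for i ∈ I_G*, and λ_i^G = λ_i^H = 0 for all i ∈ I_GH*. -/
open scoped Classical InnerProductSpace
open Filter Topology

noncomputable section

/-!
Q-stationarity supplies two multipliers `λ` and `κ = λ - μ` of the problem in which both `Gᵢ = 0`
and `Hᵢ = 0` are imposed on `I_GH*`. On `β₁` only `λ^G` and `κ^H` can be nonzero, on `β₂` only
`λ^H` and `κ^G`, and up to sign these entries are the corresponding entries of `μ ∈ N_SC`. The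
product conditions say that every entry of `μ` coming from `λ` annihilates every entry coming from
`κ`; hence one of `λ`, `κ` vanishes on all of `I_GH*` and is an S-multiplier.
-/

theorem eqOn_zero_and_eqOn_zero_or_swap {ι R : Type*} [MulZeroClass R] [NoZeroDivisors R]
    {u v : ι → R} {s t : Set ι}
    (hst : ∀ i ∈ s, ∀ j ∈ t, u i * u j = 0 ∧ v i * v j = 0)
    (hs : ∀ i ∈ s, ∀ j ∈ s, u i * v j = 0) (ht : ∀ i ∈ t, ∀ j ∈ t, u i * v j = 0) :
    (Set.EqOn u 0 s ∧ Set.EqOn v 0 t) ∨ (Set.EqOn v 0 s ∧ Set.EqOn u 0 t) := by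
  by_cases hu : Set.EqOn u 0 s
  · by_cases hv : Set.EqOn v 0 t
    · exact .inl ⟨hu, hv⟩
    · obtain ⟨j, hj, hvj⟩ : ∃ j ∈ t, v j ≠ 0 := by simpa [Set.EqOn] using hv
      exact .inr ⟨fun i hi ↦ (mul_eq_zero.1 (hst i hi j hj).2).resolve_right hvj,
        fun i hi ↦ (mul_eq_zero.1 (ht i hi j hj)).resolve_right hvj⟩
  · obtain ⟨i, hi, hui⟩ : ∃ i ∈ s, u i ≠ 0 := by simpa [Set.EqOn] using hu
    exact .inr ⟨fun j hj ↦ (mul_eq_zero.1 (hs i hi j hj)).resolve_left hui,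
      fun j hj ↦ (mul_eq_zero.1 (hst i hi j hj).1).resolve_left hui⟩

namespace MPSC

/-- The linear combination of the constraint gradients at `zs` with the given coefficients, that is,
the gradient of the MPSC Lagrangian without its objective term. -/
def gradComb {n p q m : ℕ} (P : MPSC n p q m) (zs : Euc n)
    (lg : Fin p → ℝ) (lh : Fin q → ℝ) (lG lH : Fin m → ℝ) : Euc n :=
  (∑ i, lg i • P.g' i zs) + (∑ j, lh j • P.h' j zs) + ∑ i, (lG i • P.G' i zs + lH i • P.H' i zs)

/-- `(λ^g, λ^h, λ^G, λ^H)` is a W-multiplier at `zs` (weak stationarity conditions): a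
Karush-Kuhn-Tucker multiplier of the nonlinear program in which, for the indices of `I_GH*`, both
`Gᵢ = 0` and `Hᵢ = 0` are imposed. Unlike in `IsSMult`, the coefficients `λ^g` of inactive
constraints are required to vanish, so that `R_SC` can be used as it stands. -/
structure IsWMult {n p q m : ℕ} (P : MPSC n p q m) (zs : Euc n)
    (lg : Fin p → ℝ) (lh : Fin q → ℝ) (lG lH : Fin m → ℝ) : Prop where
  inRSC : P.InRSC zs lg lh lG lH
  grad_add_gradComb : P.f' zs + P.gradComb zs lg lh lG lH = 0
  nonneg : ∀ i ∈ P.Ig zs, 0 ≤ lg i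

section Multipliers

variable {n p q m : ℕ} {P : MPSC n p q m} {zs : Euc n} {b1 b2 : Set (Fin m)}
  {lg mg : Fin p → ℝ} {lh mh : Fin q → ℝ} {lG lH mG mH : Fin m → ℝ}

theorem gradComb_sub :
    P.gradComb zs (lg - mg) (lh - mh) (lG - mG) (lH - mH) =
      P.gradComb zs lg lh lG lH - P.gradComb zs mg mh mG mH := by
  simp only [gradComb, Pi.sub_apply, sub_smul, Finset.sum_sub_distrib, Finset.sum_add_distrib]
  abel

theorem InRSC.sub_s18 (hl : P.InRSC zs lg lh lG lH) (hm : P.InRSC zs mg mh mG mH) :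
    P.InRSC zs (lg - mg) (lh - mh) (lG - mG) (lH - mH) := by
  obtain ⟨hlg, hlG, hlH⟩ := hl
  obtain ⟨hmg, hmG, hmH⟩ := hm
  exact ⟨fun i hi ↦ by simp [hlg i hi, hmg i hi], fun i hi ↦ by simp [hlG i hi, hmG i hi],
    fun i hi ↦ by simp [hlH i hi, hmH i hi]⟩

theorem IsWMult.sub_s18 (hl : P.IsWMult zs lg lh lG lH) (hm : P.InNSC zs mg mh mG mH)
    (hle : ∀ i ∈ P.Ig zs, mg i ≤ lg i) :
    P.IsWMult zs (lg - mg) (lh - mh) (lG - mG) (lH - mH) where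
  inRSC := hl.inRSC.sub_s18 hm.1
  grad_add_gradComb := by
    have hm_zero : P.gradComb zs mg mh mG mH = 0 := hm.2.symm
    rw [gradComb_sub, hm_zero, sub_zero, hl.grad_add_gradComb]
  nonneg i hi := sub_nonneg.2 (hle i hi)

theorem IsWMult.isSMult (hl : P.IsWMult zs lg lh lG lH)
    (hGH : ∀ i ∈ P.IGH zs, lG i = 0 ∧ lH i = 0) : P.IsSMult zs lg lh lG lH := by
  obtain ⟨hlg, hlG, hlH⟩ := hl.inRSC
  refine ⟨?_, hl.nonneg, hlG, hlH, hGH⟩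
  have hactive : ∑ i with i ∈ P.Ig zs, lg i • P.g' i zs = ∑ i, lg i • P.g' i zs :=
    Finset.sum_filter_of_ne fun i _ hi ↦ by
      by_contra hinactive
      exact hi (by rw [hlg i hinactive, zero_smul])
  rw [hactive, ← hl.grad_add_gradComb]
  simp only [gradComb, add_assoc]

theorem QStat.exists_isWMult_pair (hq : P.QStat zs b1 b2) :
    ∃ (lg kg : Fin p → ℝ) (lh kh : Fin q → ℝ) (lG lH kG kH : Fin m → ℝ),
      P.IsWMult zs lg lh lG lH ∧ P.IsWMult zs kg kh kG kH ∧
      P.InNSC zs (lg - kg) (lh - kh) (lG - kG) (lH - kH) ∧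
      (∀ i ∈ b1, lH i = 0 ∧ kG i = 0) ∧ ∀ i ∈ b2, lG i = 0 ∧ kH i = 0 := by
  obtain ⟨lg, mg, lh, mh, lG, lH, mG, mH, hR, hgrad, hm, hmax, h1, h2⟩ := hq
  have hl : P.IsWMult zs lg lh lG lH :=
    ⟨hR, by simpa only [gradComb, add_assoc] using hgrad.symm,
      fun i hi ↦ (le_max_right _ _).trans (hmax i hi)⟩
  refine ⟨lg, lg - mg, lh, lh - mh, lG, lH, lG - mG, lH - mH, hl,
    hl.sub_s18 hm fun i hi ↦ (le_max_left _ _).trans (hmax i hi), ?_,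
    fun i hi ↦ ⟨(h1 i hi).1, sub_eq_zero.2 (h1 i hi).2⟩,
    fun i hi ↦ ⟨(h2 i hi).1, sub_eq_zero.2 (h2 i hi).2⟩⟩
  simpa only [sub_sub_cancel] using hm

end Multipliers

end MPSC

/-- Q-stationarity w.r.t. a bipartition satisfying conditions (21)-(23)
implies S-stationarity. -/
theorem mpsc_Q_stationary_to_S_stationary {n p q m : ℕ} (P : MPSC n p q m) (zs : Euc n)
    (hfeas : zs ∈ P.Feas) (b1 b2 : Set (Fin m))
    (hb : b1 ∪ b2 = P.IGH zs) (hb' : b1 ∩ b2 = ∅)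
    (hq : P.QStat zs b1 b2)
    (hN : ∀ (mg : Fin p → ℝ) (mh : Fin q → ℝ) (mG mH : Fin m → ℝ),
      P.InNSC zs mg mh mG mH →
      (∀ i ∈ b1, ∀ i' ∈ b2, mG i * mG i' = 0 ∧ mH i * mH i' = 0) ∧
      (∀ i ∈ b1, ∀ i' ∈ b1, mG i * mH i' = 0) ∧
      (∀ i ∈ b2, ∀ i' ∈ b2, mG i * mH i' = 0)) :
    ∃ (lg : Fin p → ℝ) (lh : Fin q → ℝ) (lG lH : Fin m → ℝ),
      P.IsSMult zs lg lh lG lH := by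
  obtain ⟨lg, kg, lh, kh, lG, lH, kG, kH, hl, hk, hdiff, h1, h2⟩ := hq.exists_isWMult_pair
  obtain ⟨hcross, h11, h22⟩ := hN _ _ _ _ hdiff
  rcases eqOn_zero_and_eqOn_zero_or_swap hcross h11 h22 with ⟨hG1, hH2⟩ | ⟨hH1, hG2⟩
  · refine ⟨lg, lh, lG, lH, hl.isSMult fun i hi ↦ ?_⟩
    rcases hb.ge hi with hi | hi
    · exact ⟨(sub_eq_zero.1 (hG1 hi)).trans (h1 i hi).2, (h1 i hi).1⟩
    · exact ⟨(h2 i hi).1, (sub_eq_zero.1 (hH2 hi)).trans (h2 i hi).2⟩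
  · refine ⟨kg, kh, kG, kH, hk.isSMult fun i hi ↦ ?_⟩
    rcases hb.ge hi with hi | hi
    · exact ⟨(h1 i hi).2, (sub_eq_zero.1 (hH1 hi)).symm.trans (h1 i hi).1⟩
    · exact ⟨(sub_eq_zero.1 (hG2 hi)).symm.trans (h2 i hi).1, (h2 i hi).2⟩
end
end
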